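/- Let X be a coded shift with unique representation G = {g_1, g_2, …}, and let φ : X → ℝ be locally constant. Suppose there exists an equilibrium state μ_φ of φ with μ_φ(X_seq) = 1. Then P_top(X,φ) = P_seq(φ) = lim_{m→∞} P_top(X_m, φ|_{X_m}). -/

import Mathlib

open Filter MeasureTheory Topology
open scoped BigOperators ENNReal

noncomputable section

namespace PaperStmt

/-- The full two-sided shift: bi-infinite sequences over the alphabet `Fin d`. -/
abbrev FullShift (d : ℕ) := ℤ → Fin d

/-- The (left) shift map `f(x)_k = x_{k+1}`. -/
def shift (d : ℕ) : FullShift d → FullShift d := fun x k => x (k + 1)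

/-- A (two-sided) shift space: a nonempty closed shift-invariant subset. -/
def IsShiftSpace {d : ℕ} (X : Set (FullShift d)) : Prop :=
  X.Nonempty ∧ IsClosed X ∧ shift d '' X = X

/-- The cylinder at position `0` determined by a word `w` of length `n`. -/
def cyl {d n : ℕ} (w : Fin n → Fin d) : Set (FullShift d) :=
  {x | ∀ i : Fin n, x ((i : ℕ) : ℤ) = w i}

/-- The language of `X` in length `n`: words of length `n` occurring in elements of `X`
(at position `0`; for shift-invariant `X` this is occurrence anywhere). -/
def langSet {d : ℕ} (X : Set (FullShift d)) (n : ℕ) : Set (Fin n → Fin d) :=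
  {w | (X ∩ cyl w).Nonempty}

/-- Birkhoff sum `S_n φ`. -/
def birkhoff {d : ℕ} (φ : FullShift d → ℝ) (n : ℕ) (x : FullShift d) : ℝ :=
  ∑ k ∈ Finset.range n, φ ((shift d)^[k] x)

open Classical in
/-- The `n`-th partition function `Z_n(φ)` of `X`. -/
def Zfun {d : ℕ} (X : Set (FullShift d)) (φ : FullShift d → ℝ) (n : ℕ) : ℝ :=
  ∑ w : Fin n → Fin d,
    if (X ∩ cyl w).Nonempty then Real.exp (sSup (birkhoff φ n '' (X ∩ cyl w))) else 0

/-- Topological pressure `P_top(X,φ) = lim (1/n) log Z_n(φ) = inf_n (1/n) log Z_n(φ)`. -/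
def pressure {d : ℕ} (X : Set (FullShift d)) (φ : FullShift d → ℝ) : ℝ :=
  ⨅ n : ℕ, (1 / (n + 1 : ℝ)) * Real.log (Zfun X φ (n + 1))

/-- Topological entropy `h_top(X) = inf_n (1/n) log |L(X,n)|`. -/
def entTop {d : ℕ} (X : Set (FullShift d)) : ℝ :=
  ⨅ n : ℕ, (1 / (n + 1 : ℝ)) * Real.log ((langSet X (n + 1)).ncard : ℝ)

/-- The shift-invariant Borel probability measures giving `X` full measure. -/
def InvProb {d : ℕ} (X : Set (FullShift d)) : Set (Measure (FullShift d)) :=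
  {μ | IsProbabilityMeasure μ ∧ μ.map (shift d) = μ ∧ μ X = 1}

/-- Measure-theoretic (Kolmogorov–Sinai) entropy of an invariant measure,
computed via cylinder sets: `h_μ = lim -(1/n) Σ_{|w|=n} μ[w] log μ[w]`. -/
def mEnt {d : ℕ} (μ : Measure (FullShift d)) : ℝ :=
  Filter.liminf
    (fun n : ℕ => (1 / (n + 1 : ℝ)) *
      ∑ w : Fin (n + 1) → Fin d, Real.negMulLog (μ (cyl w)).toReal)
    Filter.atTop

/-- The free energy `h_μ(f) + ∫ φ dμ` of an invariant measure. -/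
def freeEnergy {d : ℕ} (μ : Measure (FullShift d)) (φ : FullShift d → ℝ) : ℝ :=
  mEnt μ + ∫ x, φ x ∂μ

/-- `sup { ∫ φ dμ : μ ∈ M_X }`. -/
def intAvg {d : ℕ} (X : Set (FullShift d)) (φ : FullShift d → ℝ) : ℝ :=
  sSup {r | ∃ μ ∈ InvProb X, r = ∫ x, φ x ∂μ}

/-- `μ` is an equilibrium state of `φ` on `X`. -/
def IsEqState {d : ℕ} (X : Set (FullShift d)) (φ : FullShift d → ℝ)
    (μ : Measure (FullShift d)) : Prop :=
  μ ∈ InvProb X ∧ freeEnergy μ φ = pressure X φ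

/-- `p : ℤ → ℤ` parses `x` into consecutive generator blocks from `𝒢`:
the block of `x` from `p j` to `p (j+1) - 1` is a generator, for every `j`. -/
def IsParsing {d : ℕ} (𝒢 : Set (List (Fin d))) (x : FullShift d) (p : ℤ → ℤ) : Prop :=
  StrictMono p ∧ ∀ j : ℤ, ∃ g ∈ 𝒢,
    p (j + 1) = p j + g.length ∧ ∀ (l : ℕ) (hl : l < g.length), x (p j + l) = g[l]

/-- `X_seq`: the set of bi-infinite concatenations of generators. -/
def Xseq {d : ℕ} (𝒢 : Set (List (Fin d))) : Set (FullShift d) :=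
  {x | ∃ p : ℤ → ℤ, IsParsing 𝒢 x p}

/-- The coded shift generated by `𝒢`: the closure of `X_seq`. -/
def codedShift {d : ℕ} (𝒢 : Set (List (Fin d))) : Set (FullShift d) :=
  closure (Xseq 𝒢)

/-- `𝒢` is a unique representation: every `x ∈ X_seq` admits exactly one parsing
into generator blocks (i.e. the set of cut points is uniquely determined). -/
def UniqueRep {d : ℕ} (𝒢 : Set (List (Fin d))) : Prop :=
  ∀ (x : FullShift d) (p q : ℤ → ℤ),
    IsParsing 𝒢 x p → IsParsing 𝒢 x q → Set.range p = Set.range q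

/-- `P_seq(φ) = sup { h_μ + ∫φ dμ : μ ∈ M_X, μ(Xs) = 1 }`. -/
def PseqOf {d : ℕ} (X Xs : Set (FullShift d)) (φ : FullShift d → ℝ) : ℝ :=
  sSup {r | ∃ μ ∈ InvProb X, μ Xs = 1 ∧ r = freeEnergy μ φ}

/-- `P_lim(φ) = sup { h_μ + ∫φ dμ : μ ∈ M_X, μ(X \ Xs) = 1 }`. -/
def PlimOf {d : ℕ} (X Xs : Set (FullShift d)) (φ : FullShift d → ℝ) : ℝ :=
  sSup {r | ∃ μ ∈ InvProb X, μ (X \ Xs) = 1 ∧ r = freeEnergy μ φ}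

/-- `φ` has strict full sequential pressure: `P_seq(φ) > P_lim(φ)`. -/
def StrictFSP {d : ℕ} (X Xs : Set (FullShift d)) (φ : FullShift d → ℝ) : Prop :=
  PlimOf X Xs φ < PseqOf X Xs φ

/-- `φ ∈ FSSP(X)`: `φ` lies in the sup-norm closure (within `C(X,ℝ)`) of the
set of continuous potentials with strict full sequential pressure. -/
def InFSSP {d : ℕ} (X Xs : Set (FullShift d)) (φ : FullShift d → ℝ) : Prop :=
  ∀ ε : ℝ, 0 < ε → ∃ ψ : FullShift d → ℝ, ContinuousOn ψ X ∧
    (∀ x ∈ X, |φ x - ψ x| ≤ ε) ∧ StrictFSP X Xs ψ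

/-- The invariant probability measure equidistributed on the (period-`ℓ`) orbit of `y`. -/
def periodicMeasure {d : ℕ} (y : FullShift d) (ℓ : ℕ) : Measure (FullShift d) :=
  (ℓ : ℝ≥0∞)⁻¹ • ∑ k ∈ Finset.range ℓ, Measure.dirac ((shift d)^[k] y)

/-- `y` is periodic with period `ℓ ≥ 1`. -/
def IsPeriodicOf {d : ℕ} (y : FullShift d) (ℓ : ℕ) : Prop :=
  1 ≤ ℓ ∧ (shift d)^[ℓ] y = y

/-!
In a concatenation of generators, replace every block outside `ℋ m` by a fixed shortest generator.
This never lengthens a block, so it compresses a point `x` of `Xseq 𝒢` to a point `y` of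
`Xseq (ℋ m)`. A word of `x` is recovered from the word of `y` by recording, at each time when a
replaced block is near, the letter of `x` and whether the position in `y` stays put. Unique
representation makes the set of the remaining, *clean* points measurable, and as `m → ∞` its measure
tends to `1` for the given equilibrium state `μ`.

Penalize the unclean visits by the potential `φ - c • Cᶜ.indicator 1`, where `C` is the clean set.
Each of them then costs a factor `exp (-c)`, which pays for the number of words with the same
compression, so for large `c` the pressure of the penalized potential on `Xseq 𝒢` is at most
slightly above the pressure of `φ` on the shift coded by `ℋ m`. By the variational inequality it is
at least the free energy of `μ` minus `c * μ.real Cᶜ`, and this loss vanishes as `m → ∞`.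
-/

section Dynamics

variable {d : ℕ}

lemma iterate_shift_apply (n : ℕ) (x : FullShift d) (i : ℤ) :
    (shift d)^[n] x i = x (i + n) := by
  induction n generalizing x with
  | zero => simp
  | succ n ih =>
    rw [Function.iterate_succ_apply, ih, shift]
    congr 1
    push_cast
    ring

lemma continuous_shift : Continuous (shift d) :=
  continuous_pi fun k => continuous_apply (k + 1)

lemma measurable_shift : Measurable (shift d) :=
  continuous_shift.measurable

lemma birkhoff_add (φ : FullShift d → ℝ) (m n : ℕ) (x : FullShift d) :
    birkhoff φ (m + n) x = birkhoff φ m x + birkhoff φ n ((shift d)^[m] x) :=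
  birkhoffSum_add _ _ _ _ _

lemma birkhoff_succ (φ : FullShift d → ℝ) (n : ℕ) (x : FullShift d) :
    birkhoff φ (n + 1) x = birkhoff φ n x + φ ((shift d)^[n] x) :=
  birkhoffSum_succ _ _ _ _

lemma birkhoff_sub_smul (φ g : FullShift d → ℝ) (c : ℝ) (n : ℕ) (x : FullShift d) :
    birkhoff (φ - c • g) n x = birkhoff φ n x - c * birkhoff g n x := by
  simp only [birkhoff, Pi.sub_apply, Pi.smul_apply, smul_eq_mul, Finset.sum_sub_distrib,
    Finset.mul_sum]

lemma abs_birkhoff_le {X : Set (FullShift d)} (hX : Set.MapsTo (shift d) X X)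
    {φ : FullShift d → ℝ} {K : ℝ} (hK : ∀ x ∈ X, |φ x| ≤ K) (n : ℕ) {x : FullShift d}
    (hx : x ∈ X) : |birkhoff φ n x| ≤ n * K := by
  calc |birkhoff φ n x| ≤ ∑ k ∈ Finset.range n, |φ ((shift d)^[k] x)| :=
        Finset.abs_sum_le_sum_abs _ _
    _ ≤ ∑ _k ∈ Finset.range n, K := Finset.sum_le_sum fun k _ => hK _ (hX.iterate k hx)
    _ = n * K := by simp

end Dynamics

section Cylinders

variable {d n : ℕ}

/-- The word of length `n` that `x` carries at positions `0, …, n - 1`; the cylinders of length `n`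
are its fibres. -/
def initialWord (n : ℕ) (x : FullShift d) : Fin n → Fin d :=
  fun i => x ((i : ℕ) : ℤ)

lemma mem_cyl_iff {w : Fin n → Fin d} {x : FullShift d} : x ∈ cyl w ↔ initialWord n x = w :=
  funext_iff.symm

lemma mem_cyl_initialWord (n : ℕ) (x : FullShift d) : x ∈ cyl (initialWord n x) :=
  mem_cyl_iff.2 rfl

lemma initialWord_eq_iff {x y : FullShift d} :
    initialWord n x = initialWord n y ↔ ∀ i < n, x (i : ℤ) = y (i : ℤ) :=
  funext_iff.trans Fin.forall_iff

lemma measurableSet_cyl (w : Fin n → Fin d) : MeasurableSet (cyl w) := by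
  have hcont : Continuous (initialWord n : FullShift d → _) :=
    continuous_pi fun i => continuous_apply ((i : ℕ) : ℤ)
  have hpre : cyl w = initialWord n ⁻¹' {w} := Set.ext fun _ => mem_cyl_iff
  exact hpre ▸ hcont.measurable (measurableSet_singleton w)

lemma pairwise_disjoint_cyl (n : ℕ) :
    Pairwise (Function.onFun Disjoint fun w : Fin n → Fin d => cyl w) := fun _ _ huv =>
  Set.disjoint_left.2 fun _ hu hv => huv ((mem_cyl_iff.1 hu).symm.trans (mem_cyl_iff.1 hv))

lemma iUnion_cyl (n : ℕ) : ⋃ w : Fin n → Fin d, cyl w = Set.univ :=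
  Set.eq_univ_of_forall fun x => Set.mem_iUnion.2 ⟨_, mem_cyl_initialWord n x⟩

lemma mem_cyl_append {m : ℕ} {u : Fin m → Fin d} {v : Fin n → Fin d} {x : FullShift d} :
    x ∈ cyl (Fin.append u v) ↔ x ∈ cyl u ∧ (shift d)^[m] x ∈ cyl v := by
  simp only [cyl, Set.mem_ofPred_eq, Fin.forall_fin_add, Fin.append_left, Fin.append_right,
    Fin.val_castAdd, Fin.val_natAdd, iterate_shift_apply, Nat.cast_add, add_comm]

end Cylinders

section Pressure

variable {d : ℕ} {X Y : Set (FullShift d)} {φ f : FullShift d → ℝ} {K : ℝ} {n : ℕ}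
  {w : Fin n → Fin d}

/-- The contribution of the word `w` to the partition function `Zfun X φ n`. -/
def wordWeight (X : Set (FullShift d)) (φ : FullShift d → ℝ) {n : ℕ} (w : Fin n → Fin d) : ℝ :=
  open Classical in
  if (X ∩ cyl w).Nonempty then Real.exp (sSup (birkhoff φ n '' (X ∩ cyl w))) else 0

lemma Zfun_eq_sum_wordWeight (X : Set (FullShift d)) (φ : FullShift d → ℝ) (n : ℕ) :
    Zfun X φ n = ∑ w : Fin n → Fin d, wordWeight X φ w := rfl

lemma wordWeight_pos (h : (X ∩ cyl w).Nonempty) : 0 < wordWeight X φ w := by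
  rw [wordWeight, if_pos h]
  exact Real.exp_pos _

lemma wordWeight_eq_zero (h : ¬(X ∩ cyl w).Nonempty) : wordWeight X φ w = 0 :=
  if_neg h

lemma wordWeight_nonneg (X : Set (FullShift d)) (φ : FullShift d → ℝ) (w : Fin n → Fin d) :
    0 ≤ wordWeight X φ w := by
  by_cases h : (X ∩ cyl w).Nonempty
  · exact (wordWeight_pos h).le
  · exact (wordWeight_eq_zero h).ge

lemma exp_birkhoff_le_wordWeight (hX : Set.MapsTo (shift d) X X) (hK : ∀ x ∈ X, |φ x| ≤ K)
    {x : FullShift d} (hx : x ∈ X) (hw : x ∈ cyl w) :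
    Real.exp (birkhoff φ n x) ≤ wordWeight X φ w := by
  have hbdd : BddAbove (birkhoff φ n '' (X ∩ cyl w)) :=
    ⟨n * K, Set.forall_mem_image.2 fun y hy => (abs_le.1 (abs_birkhoff_le hX hK n hy.1)).2⟩
  rw [wordWeight, if_pos ⟨x, hx, hw⟩]
  exact Real.exp_le_exp.2 (le_csSup hbdd (Set.mem_image_of_mem _ ⟨hx, hw⟩))

lemma wordWeight_le {r : ℝ} (hr : 0 ≤ r)
    (h : ∀ x ∈ X, x ∈ cyl w → Real.exp (birkhoff φ n x) ≤ r) : wordWeight X φ w ≤ r := by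
  by_cases hne : (X ∩ cyl w).Nonempty
  · obtain ⟨x₀, hx₀, hw₀⟩ := id hne
    have hr₀ : 0 < r := (Real.exp_pos _).trans_le (h x₀ hx₀ hw₀)
    rw [wordWeight, if_pos hne, ← Real.le_log_iff_exp_le hr₀]
    exact csSup_le (hne.image _) <| Set.forall_mem_image.2 fun x hx =>
      (Real.le_log_iff_exp_le hr₀).2 (h x hx.1 hx.2)
  · rwa [wordWeight_eq_zero hne]

lemma wordWeight_append_le (hX : Set.MapsTo (shift d) X X) (hK : ∀ x ∈ X, |φ x| ≤ K)
    {m : ℕ} (u : Fin m → Fin d) (v : Fin n → Fin d) :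
    wordWeight X φ (Fin.append u v) ≤ wordWeight X φ u * wordWeight X φ v := by
  refine wordWeight_le (mul_nonneg (wordWeight_nonneg X φ u) (wordWeight_nonneg X φ v))
    fun x hx hw => ?_
  obtain ⟨hu, hv⟩ := mem_cyl_append.1 hw
  rw [birkhoff_add, Real.exp_add]
  exact mul_le_mul (exp_birkhoff_le_wordWeight hX hK hx hu)
    (exp_birkhoff_le_wordWeight hX hK (hX.iterate m hx) hv) (Real.exp_pos _).le
    (wordWeight_nonneg X φ u)

lemma exists_mul_wordWeight_le {r : ℝ} (hr₀ : 0 ≤ r) (hr₁ : r < 1)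
    (hne : (X ∩ cyl w).Nonempty) :
    ∃ x ∈ X, x ∈ cyl w ∧ r * wordWeight X φ w ≤ Real.exp (birkhoff φ n x) := by
  by_contra! h
  have hpos := wordWeight_pos (φ := φ) hne
  have hle : wordWeight X φ w ≤ r * wordWeight X φ w :=
    wordWeight_le (mul_nonneg hr₀ hpos.le) fun x hx hw => (h x hx hw).le
  exact hle.not_gt (mul_lt_of_lt_one_left hpos hr₁)

lemma exp_le_Zfun (hX : Set.MapsTo (shift d) X X) (hK : ∀ x ∈ X, |φ x| ≤ K)
    (hne : X.Nonempty) (n : ℕ) : Real.exp (-(n * K)) ≤ Zfun X φ n := by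
  obtain ⟨x, hx⟩ := hne
  calc Real.exp (-(n * K)) ≤ Real.exp (birkhoff φ n x) :=
        Real.exp_le_exp.2 (abs_le.1 (abs_birkhoff_le hX hK n hx)).1
    _ ≤ wordWeight X φ (initialWord n x) :=
        exp_birkhoff_le_wordWeight hX hK hx (mem_cyl_initialWord n x)
    _ ≤ Zfun X φ n :=
        Finset.single_le_sum (fun w _ => wordWeight_nonneg X φ w) (Finset.mem_univ _)

lemma Zfun_pos (hX : Set.MapsTo (shift d) X X) (hK : ∀ x ∈ X, |φ x| ≤ K)
    (hne : X.Nonempty) (n : ℕ) : 0 < Zfun X φ n :=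
  (Real.exp_pos _).trans_le (exp_le_Zfun hX hK hne n)

lemma Zfun_add_le (hX : Set.MapsTo (shift d) X X) (hK : ∀ x ∈ X, |φ x| ≤ K) (m n : ℕ) :
    Zfun X φ (m + n) ≤ Zfun X φ m * Zfun X φ n := by
  simp only [Zfun_eq_sum_wordWeight]
  rw [← (Fin.appendEquiv m n).sum_comp, Finset.sum_mul_sum, ← Finset.univ_product_univ,
    Finset.sum_product]
  exact Finset.sum_le_sum fun u _ => Finset.sum_le_sum fun v _ =>
    wordWeight_append_le hX hK u v

lemma Zfun_mono (hYX : Y ⊆ X) (hX : Set.MapsTo (shift d) X X) (hK : ∀ x ∈ X, |φ x| ≤ K)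
    (n : ℕ) : Zfun Y φ n ≤ Zfun X φ n :=
  Finset.sum_le_sum fun w _ => wordWeight_le (wordWeight_nonneg X φ w) fun _ hx hw =>
    exp_birkhoff_le_wordWeight hX hK (hYX hx) hw

open Classical in
lemma Zfun_eq_sum_subtype (X : Set (FullShift d)) (φ : FullShift d → ℝ) (n : ℕ) :
    Zfun X φ n = ∑ w : langSet X n, wordWeight X φ w.1 :=
  (Finset.sum_congr_set (langSet X n) _ _ (fun _ _ => rfl)
    fun _ h => wordWeight_eq_zero h)

-- The suprema in `Zfun` need not be attained: choose points realising each of them up to a factor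
-- `r < 1`, then let `r` tend to `1`.
lemma Zfun_le_of_forall_sum_exp_le {M : ℝ}
    (h : ∀ s : Finset (FullShift d), ↑s ⊆ X → Set.InjOn (initialWord n) (s : Set (FullShift d)) →
      ∑ x ∈ s, Real.exp (birkhoff φ n x) ≤ M) :
    Zfun X φ n ≤ M := by
  classical
  have hr : ∀ r ∈ Set.Ioo (0 : ℝ) 1, r * Zfun X φ n ≤ M := by
    rintro r ⟨hr₀, hr₁⟩
    choose y hyX hyw hy using fun w : langSet X n =>
      exists_mul_wordWeight_le (φ := φ) hr₀.le hr₁ w.2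
    have hword : ∀ w, initialWord n (y w) = w := fun w => mem_cyl_iff.1 (hyw w)
    have hinj : Function.Injective y := fun u v huv => by
      rw [← Subtype.coe_inj, ← hword u, huv, hword v]
    calc r * Zfun X φ n = ∑ w : langSet X n, r * wordWeight X φ w.1 := by
          rw [Zfun_eq_sum_subtype, Finset.mul_sum]
      _ ≤ ∑ w : langSet X n, Real.exp (birkhoff φ n (y w)) := Finset.sum_le_sum fun w _ => hy w
      _ = ∑ x ∈ Finset.univ.map ⟨y, hinj⟩, Real.exp (birkhoff φ n x) :=
          (Finset.sum_map Finset.univ ⟨y, hinj⟩ fun x => Real.exp (birkhoff φ n x)).symm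
      _ ≤ M := by
          refine h _ (by simpa [Set.range_subset_iff] using hyX) ?_
          simp only [Finset.coe_map, Function.Embedding.coeFn_mk, Finset.coe_univ, Set.image_univ]
          rintro _ ⟨u, rfl⟩ _ ⟨v, rfl⟩ huv
          rw [Subtype.coe_inj.1 ((hword u).symm.trans (huv.trans (hword v)))]
  have hlim : Tendsto (fun r : ℝ => r * Zfun X φ n) (𝓝[<] 1) (𝓝 (Zfun X φ n)) := by
    simpa using (tendsto_id.mul_const (Zfun X φ n)).mono_left (nhdsWithin_le_nhds (a := (1 : ℝ)))
  exact le_of_tendsto hlim (mem_of_superset (Ioo_mem_nhdsLT one_pos) hr)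

lemma neg_le_log_Zfun_div (hX : Set.MapsTo (shift d) X X) (hK : ∀ x ∈ X, |φ x| ≤ K)
    (hne : X.Nonempty) (n : ℕ) : -K ≤ (1 / (n + 1 : ℝ)) * Real.log (Zfun X φ (n + 1)) := by
  have h := (Real.le_log_iff_exp_le (Zfun_pos hX hK hne (n + 1))).2
    (exp_le_Zfun hX hK hne (n + 1))
  rw [one_div, ← div_eq_inv_mul, le_div_iff₀ (by positivity)]
  push_cast at h
  linarith

lemma pressure_le_add_log_of_Zfun_le (hY : Set.MapsTo (shift d) Y Y) (hK : ∀ x ∈ Y, |f x| ≤ K)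
    (hne : Y.Nonempty) {B : ℝ} (hB : 0 < B) (h : ∀ n, Zfun Y f n ≤ Zfun X φ n * B ^ n) :
    pressure Y f ≤ pressure X φ + Real.log B := by
  have hbdd : BddBelow (Set.range fun n : ℕ => (1 / (n + 1 : ℝ)) * Real.log (Zfun Y f (n + 1))) :=
    ⟨-K, Set.forall_mem_range.2 (neg_le_log_Zfun_div hY hK hne)⟩
  rw [← sub_le_iff_le_add]
  refine le_ciInf fun n => sub_le_iff_le_add.2 ((ciInf_le hbdd n).trans ?_)
  have hZY : 0 < Zfun Y f (n + 1) := Zfun_pos hY hK hne _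
  have hZX : 0 < Zfun X φ (n + 1) := pos_of_mul_pos_left (hZY.trans_le (h _)) (by positivity)
  have hlog := Real.log_le_log hZY (h (n + 1))
  rw [Real.log_mul hZX.ne' (by positivity), Real.log_pow] at hlog
  calc 1 / (n + 1 : ℝ) * Real.log (Zfun Y f (n + 1))
      ≤ 1 / (n + 1 : ℝ) * (Real.log (Zfun X φ (n + 1)) + (n + 1 : ℕ) * Real.log B) := by gcongr
    _ = 1 / (n + 1 : ℝ) * Real.log (Zfun X φ (n + 1)) + Real.log B := by
        push_cast
        field_simp

lemma pressure_mono (hYX : Y ⊆ X) (hY : Set.MapsTo (shift d) Y Y)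
    (hX : Set.MapsTo (shift d) X X) (hK : ∀ x ∈ X, |φ x| ≤ K) (hne : Y.Nonempty) :
    pressure Y φ ≤ pressure X φ := by
  simpa using pressure_le_add_log_of_Zfun_le hY (fun x hx => hK x (hYX hx)) hne one_pos
    fun n => by simpa using Zfun_mono hYX hX hK n

lemma subadditive_log_Zfun (hX : Set.MapsTo (shift d) X X) (hK : ∀ x ∈ X, |φ x| ≤ K)
    (hne : X.Nonempty) : Subadditive fun n => Real.log (Zfun X φ n) := fun m n => by
  rw [← Real.log_mul (Zfun_pos hX hK hne m).ne' (Zfun_pos hX hK hne n).ne']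
  exact Real.log_le_log (Zfun_pos hX hK hne _) (Zfun_add_le hX hK m n)

lemma pressure_eq_lim (h : Subadditive fun n => Real.log (Zfun X φ n)) :
    pressure X φ = h.lim := by
  have hIci : Set.Ici 1 = Set.range Nat.succ := Nat.range_succ.symm
  rw [Subadditive.lim, hIci, ← Set.range_comp, sInf_range, pressure]
  refine iInf_congr fun n => ?_
  rw [Function.comp_apply, Nat.cast_succ, one_div_mul_eq_div]

lemma tendsto_pressure (hX : Set.MapsTo (shift d) X X) (hK : ∀ x ∈ X, |φ x| ≤ K)
    (hne : X.Nonempty) :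
    Tendsto (fun n : ℕ => (1 / (n + 1 : ℝ)) * Real.log (Zfun X φ (n + 1))) atTop
      (𝓝 (pressure X φ)) := by
  have hsub := subadditive_log_Zfun hX hK hne
  have hbdd : BddBelow (Set.range fun n : ℕ => Real.log (Zfun X φ n) / n) := by
    refine ⟨min (-K) 0, Set.forall_mem_range.2 fun n => ?_⟩
    cases n with
    | zero => simp
    | succ n =>
      rw [Nat.cast_succ, ← one_div_mul_eq_div]
      exact (min_le_left _ _).trans (neg_le_log_Zfun_div hX hK hne n)
  rw [pressure_eq_lim hsub]
  refine ((tendsto_add_atTop_iff_nat 1).2 (hsub.tendsto_lim hbdd)).congr fun n => ?_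
  rw [Nat.cast_succ, one_div_mul_eq_div]

end Pressure

section VariationalInequality

lemma negMulLog_add_mul_log_le {p z S : ℝ} (hp : 0 ≤ p) (hz : 0 ≤ z) (hpz : p ≠ 0 → 0 < z)
    (hS : 0 < S) :
    Real.negMulLog p + p * Real.log z ≤ p * Real.log S + (z / S - p) := by
  rcases eq_or_ne p 0 with rfl | hp₀
  · simpa using div_nonneg hz hS.le
  · have hz₀ := hpz hp₀
    have : 0 < p := hp.lt_of_ne' hp₀
    have hlog : Real.log (z / (p * S)) ≤ z / (p * S) - 1 :=
      Real.log_le_sub_one_of_pos (by positivity)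
    rw [Real.log_div hz₀.ne' (by positivity), Real.log_mul hp₀ hS.ne'] at hlog
    calc Real.negMulLog p + p * Real.log z
        = p * (Real.log z - (Real.log p + Real.log S)) + p * Real.log S := by
          rw [Real.negMulLog]; ring
      _ ≤ p * (z / (p * S) - 1) + p * Real.log S := by gcongr
      _ = p * Real.log S + (z / S - p) := by field_simp; ring

lemma sum_negMulLog_add_mul_log_le_log_sum {ι : Type*} (s : Finset ι) {p z : ι → ℝ}
    (hp : ∀ i ∈ s, 0 ≤ p i) (hp₁ : ∑ i ∈ s, p i = 1) (hz : ∀ i ∈ s, 0 ≤ z i)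
    (hpz : ∀ i ∈ s, p i ≠ 0 → 0 < z i) :
    ∑ i ∈ s, (Real.negMulLog (p i) + p i * Real.log (z i)) ≤ Real.log (∑ i ∈ s, z i) := by
  set S := ∑ i ∈ s, z i
  have hS : 0 < S := by
    obtain ⟨i, hi, hi₀⟩ := Finset.exists_ne_zero_of_sum_ne_zero (hp₁.trans_ne one_ne_zero)
    exact (hpz i hi hi₀).trans_le (Finset.single_le_sum hz hi)
  calc ∑ i ∈ s, (Real.negMulLog (p i) + p i * Real.log (z i))
      ≤ ∑ i ∈ s, (p i * Real.log S + (z i / S - p i)) := Finset.sum_le_sum fun i hi =>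
        negMulLog_add_mul_log_le (hp i hi) (hz i hi) (hpz i hi) hS
    _ = Real.log S := by
        rw [Finset.sum_add_distrib, Finset.sum_sub_distrib, ← Finset.sum_mul, hp₁,
          ← Finset.sum_div, div_self hS.ne']
        ring

variable {d : ℕ} {μ : Measure (FullShift d)} {f : FullShift d → ℝ}

lemma integrable_birkhoff (hμ : MeasurePreserving (shift d) μ μ) (hf : Integrable f μ) (n : ℕ) :
    Integrable (birkhoff f n) μ :=
  integrable_finsetSum _ fun k _ => (hμ.iterate k).integrable_comp_of_integrable hf

lemma integral_birkhoff (hμ : MeasurePreserving (shift d) μ μ) (hf : Integrable f μ) (n : ℕ) :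
    ∫ x, birkhoff f n x ∂μ = n * ∫ x, f x ∂μ := by
  have hcomp (k : ℕ) : ∫ x, f ((shift d)^[k] x) ∂μ = ∫ x, f x ∂μ := by
    have hk := hμ.iterate k
    rw [← integral_map hk.measurable.aemeasurable
      (by rw [hk.map_eq]; exact hf.aestronglyMeasurable), hk.map_eq]
  calc ∫ x, birkhoff f n x ∂μ = ∑ k ∈ Finset.range n, ∫ x, f ((shift d)^[k] x) ∂μ :=
        integral_finsetSum _ fun k _ => (hμ.iterate k).integrable_comp_of_integrable hf
    _ = n * ∫ x, f x ∂μ := by simp [hcomp]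

lemma integral_eq_sum_setIntegral_cyl (hf : Integrable f μ) (n : ℕ) :
    ∫ x, f x ∂μ = ∑ w : Fin n → Fin d, ∫ x in cyl w, f x ∂μ := by
  rw [← integral_iUnion_fintype measurableSet_cyl (pairwise_disjoint_cyl n)
    fun _ => hf.integrableOn, iUnion_cyl, setIntegral_univ]

lemma sum_measureReal_cyl [IsProbabilityMeasure μ] (n : ℕ) :
    ∑ w : Fin n → Fin d, μ.real (cyl w) = 1 := by
  simpa using (integral_eq_sum_setIntegral_cyl (integrable_const (1 : ℝ)) n (μ := μ)).symm

lemma setIntegral_cyl_birkhoff_le [IsFiniteMeasure μ] {Y : Set (FullShift d)} {K : ℝ}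
    (hY : Set.MapsTo (shift d) Y Y) (hK : ∀ x ∈ Y, |f x| ≤ K)
    (hμ : MeasurePreserving (shift d) μ μ) (hμY : μ Yᶜ = 0) (hf : Integrable f μ)
    {n : ℕ} (w : Fin n → Fin d) :
    ∫ x in cyl w, birkhoff f n x ∂μ ≤ μ.real (cyl w) * Real.log (wordWeight Y f w) := by
  have hle : ∀ᵐ x ∂μ, x ∈ cyl w → birkhoff f n x ≤ Real.log (wordWeight Y f w) := by
    filter_upwards [mem_ae_iff.2 hμY] with x hx hw
    exact (Real.le_log_iff_exp_le (wordWeight_pos ⟨x, hx, hw⟩)).2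
      (exp_birkhoff_le_wordWeight hY hK hx hw)
  calc ∫ x in cyl w, birkhoff f n x ∂μ
      ≤ ∫ _ in cyl w, Real.log (wordWeight Y f w) ∂μ :=
        setIntegral_mono_on_ae (integrable_birkhoff hμ hf n).integrableOn
          (integrable_const _).integrableOn (measurableSet_cyl w) hle
    _ = μ.real (cyl w) * Real.log (wordWeight Y f w) := by simp

lemma sum_negMulLog_add_integral_le_log_Zfun [IsProbabilityMeasure μ] {Y : Set (FullShift d)}
    {K : ℝ} (hY : Set.MapsTo (shift d) Y Y) (hK : ∀ x ∈ Y, |f x| ≤ K)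
    (hμ : MeasurePreserving (shift d) μ μ) (hμY : μ Yᶜ = 0) (hf : Integrable f μ) (n : ℕ) :
    ∑ w : Fin n → Fin d, Real.negMulLog (μ.real (cyl w)) + n * ∫ x, f x ∂μ ≤
      Real.log (Zfun Y f n) := by
  rw [← integral_birkhoff hμ hf, integral_eq_sum_setIntegral_cyl (integrable_birkhoff hμ hf n) n,
    ← Finset.sum_add_distrib]
  have hpos (w : Fin n → Fin d) (hw : μ.real (cyl w) ≠ 0) : 0 < wordWeight Y f w := by
    obtain ⟨x, hxw, hxY⟩ := nonempty_of_measure_ne_zero (μ := μ) (s := cyl w ∩ Y) <| by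
      rw [measure_inter_conull hμY]
      exact fun h => hw (by rw [measureReal_def, h, ENNReal.toReal_zero])
    exact wordWeight_pos ⟨x, hxY, hxw⟩
  exact (Finset.sum_le_sum fun w _ => add_le_add_right
      (setIntegral_cyl_birkhoff_le hY hK hμ hμY hf w) _).trans <|
    sum_negMulLog_add_mul_log_le_log_sum _ (fun _ _ => measureReal_nonneg)
      (sum_measureReal_cyl n) (fun w _ => wordWeight_nonneg Y f w) fun w _ => hpos w

lemma freeEnergy_le_pressure [IsProbabilityMeasure μ] {Y : Set (FullShift d)} {K : ℝ}
    (hY : Set.MapsTo (shift d) Y Y) (hK : ∀ x ∈ Y, |f x| ≤ K)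
    (hμ : MeasurePreserving (shift d) μ μ) (hμY : μ Yᶜ = 0) (hf : Integrable f μ) :
    freeEnergy μ f ≤ pressure Y f := by
  have hne : Y.Nonempty := Filter.nonempty_of_mem (mem_ae_iff.2 hμY)
  have hlim := (tendsto_pressure hY hK hne).sub_const (∫ x, f x ∂μ)
  have hbound (n : ℕ) : (1 / (n + 1 : ℝ)) *
      ∑ w : Fin (n + 1) → Fin d, Real.negMulLog (μ (cyl w)).toReal ≤
      (1 / (n + 1 : ℝ)) * Real.log (Zfun Y f (n + 1)) - ∫ x, f x ∂μ := by
    have h := sum_negMulLog_add_integral_le_log_Zfun hY hK hμ hμY hf (n + 1)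
    rw [Nat.cast_succ, ← le_sub_iff_add_le] at h
    calc _ ≤ 1 / (n + 1 : ℝ) * (Real.log (Zfun Y f (n + 1)) - (n + 1) * ∫ x, f x ∂μ) := by
          gcongr
          exact h
      _ = _ := by field_simp
  have hnonneg (n : ℕ) : 0 ≤ (1 / (n + 1 : ℝ)) *
      ∑ w : Fin (n + 1) → Fin d, Real.negMulLog (μ (cyl w)).toReal :=
    mul_nonneg (by positivity) <| Finset.sum_nonneg fun w _ =>
      Real.negMulLog_nonneg measureReal_nonneg measureReal_le_one
  have hent : mEnt μ ≤ pressure Y f - ∫ x, f x ∂μ :=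
    hlim.liminf_eq ▸ liminf_le_liminf (Eventually.of_forall hbound)
      (isBoundedUnder_of ⟨0, hnonneg⟩) hlim.isCoboundedUnder_ge
  exact le_sub_iff_add_le.1 hent

end VariationalInequality

section Continuity

variable {d : ℕ} {X : Set (FullShift d)} {φ : FullShift d → ℝ}

lemma hasBasis_nhds_agree (x : FullShift d) :
    (𝓝 x).HasBasis (fun _ : ℕ => True) fun k => {y | ∀ i : ℤ, |i| ≤ (k : ℤ) → x i = y i} := by
  refine ⟨fun s => ?_⟩
  simp only [nhds_pi, nhds_discrete, Filter.mem_pi, mem_pure, true_and]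
  constructor
  · rintro ⟨I, hI, t, ht, hts⟩
    obtain ⟨k, hk⟩ := (hI.image Int.natAbs).bddAbove
    refine ⟨k, fun y hy => hts fun i hi => hy i ?_ ▸ ht i⟩
    rw [Int.abs_eq_natAbs]
    exact_mod_cast hk (Set.mem_image_of_mem _ hi)
  · rintro ⟨k, hk⟩
    refine ⟨Set.Icc (-k) k, Set.finite_Icc _ _, fun i => {x i}, fun _ => rfl, fun y hy => hk ?_⟩
    exact fun i hi => (hy i (abs_le.1 hi)).symm

lemma continuousOn_of_locallyConstant {k : ℕ}
    (hLC : ∀ x ∈ X, ∀ y ∈ X, (∀ i : ℤ, |i| ≤ (k : ℤ) → x i = y i) → φ x = φ y) :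
    ContinuousOn φ X := fun x hx => by
  have hev : ∀ᶠ y in 𝓝[X] x, φ x = φ y := by
    filter_upwards [nhdsWithin_le_nhds ((hasBasis_nhds_agree x).mem_of_mem (i := k) trivial),
      self_mem_nhdsWithin] with y hy hyX
    exact hLC x hx y hyX hy
  exact tendsto_const_nhds.congr' hev

lemma exists_forall_agree_abs_sub_le (hX : IsCompact X) (hφ : ContinuousOn φ X) {δ : ℝ}
    (hδ : 0 < δ) : ∃ k : ℕ, ∀ x ∈ X, ∀ y ∈ X,
      (∀ i : ℤ, |i| ≤ (k : ℤ) → x i = y i) → |φ x - φ y| ≤ δ := by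
  have hloc : ∀ x ∈ X, ∃ k : ℕ, ∀ y ∈ X, (∀ i : ℤ, |i| ≤ (k : ℤ) → x i = y i) →
      |φ y - φ x| ≤ δ / 2 := fun x hx => by
    obtain ⟨k, -, hk⟩ := ((nhdsWithin_hasBasis (hasBasis_nhds_agree x) X).tendsto_iff
      Metric.nhds_basis_closedBall).1 (hφ x hx) (δ / 2) (half_pos hδ)
    exact ⟨k, fun y hyX hy => hk y ⟨hy, hyX⟩⟩
  choose! k hk using hloc
  obtain ⟨t, htX, ht⟩ := hX.elim_nhds_subcover _ fun x _ =>
    (hasBasis_nhds_agree x).mem_of_mem (i := k x) trivial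
  refine ⟨t.sup k, fun x hx y hy hxy => ?_⟩
  obtain ⟨z, hz, hzx⟩ := Set.mem_iUnion₂.1 (ht hx)
  have hkz : k z ≤ t.sup k := Finset.le_sup hz
  have hzy : ∀ i : ℤ, |i| ≤ (k z : ℤ) → z i = y i := fun i hi =>
    (hzx i hi).trans (hxy i (hi.trans (by exact_mod_cast hkz)))
  have hx' := abs_le.1 (hk z (htX z hz) x hx hzx)
  have hy' := abs_le.1 (hk z (htX z hz) y hy hzy)
  exact abs_le.2 ⟨by linarith, by linarith⟩

end Continuity

section CutSequences

variable {p q : ℤ → ℤ}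

lemma monotone_sub_self (hp : StrictMono p) : Monotone fun j => p j - j :=
  monotone_int_of_le_succ fun j => by
    have := hp (lt_add_one j)
    omega

lemma exists_mem_block (hp : StrictMono p) (i : ℤ) : ∃ j, p j ≤ i ∧ i < p (j + 1) := by
  have hmono := monotone_sub_self hp
  have hbdd : ∀ z, p z ≤ i → z ≤ max 0 (i - p 0) := fun z hz => by
    rcases le_total z 0 with hz₀ | hz₀
    · exact hz₀.trans (le_max_left _ _)
    · have := hmono hz₀
      dsimp only at this
      omega
  have hex : p (min 0 (i - p 0)) ≤ i := by
    have := hmono (min_le_left 0 (i - p 0))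
    dsimp only at this
    omega
  obtain ⟨j, hj, hmax⟩ := Int.exists_greatest_of_bdd (P := fun j => p j ≤ i) ⟨_, hbdd⟩ ⟨_, hex⟩
  exact ⟨j, hj, not_le.1 fun h => (hmax _ h).not_gt (lt_add_one j)⟩

lemma eq_of_mem_block (hp : StrictMono p) {i j j' : ℤ} (hj : p j ≤ i) (hj₁ : i < p (j + 1))
    (hj' : p j' ≤ i) (hj'₁ : i < p (j' + 1)) : j = j' :=
  le_antisymm (Int.lt_add_one_iff.1 (hp.lt_iff_lt.1 (hj.trans_lt hj'₁)))
    (Int.lt_add_one_iff.1 (hp.lt_iff_lt.1 (hj'.trans_lt hj₁)))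

lemma succ_le_of_range_subset (hp : StrictMono p) (hq : StrictMono q)
    (h : Set.range p ⊆ Set.range q) {j j' : ℤ} (hj : p j = q j') : q (j' + 1) ≤ p (j + 1) := by
  obtain ⟨i, hi⟩ := h ⟨j + 1, rfl⟩
  have hlt : q j' < q i := by
    rw [hi, ← hj]
    exact hp (lt_add_one j)
  exact hi ▸ hq.monotone (hq.lt_iff_lt.1 hlt)

lemma succ_eq_of_range_eq (hp : StrictMono p) (hq : StrictMono q)
    (h : Set.range p = Set.range q) {j j' : ℤ} (hj : p j = q j') : p (j + 1) = q (j' + 1) :=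
  le_antisymm (succ_le_of_range_subset hq hp h.ge hj.symm)
    (succ_le_of_range_subset hp hq h.le hj)

lemma apply_zero_le_of_range_subset (hq : StrictMono q) (h : Set.range p ⊆ Set.range q)
    (hp₀ : p 0 ≤ 0) (hq₁ : 0 < q 1) : p 0 ≤ q 0 := by
  obtain ⟨i, hi⟩ := h ⟨0, rfl⟩
  have hi₁ : i < 0 + 1 := hq.lt_iff_lt.1 (by simpa [hi] using hp₀.trans_lt hq₁)
  exact hi ▸ hq.monotone (Int.lt_add_one_iff.1 hi₁)

lemma eq_of_range_eq (hp : StrictMono p) (hq : StrictMono q) (h : Set.range p = Set.range q)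
    (hp₀ : p 0 ≤ 0) (hp₁ : 0 < p 1) (hq₀ : q 0 ≤ 0) (hq₁ : 0 < q 1) : p = q := by
  funext j
  induction j using Int.induction_on with
  | zero =>
    exact le_antisymm (apply_zero_le_of_range_subset hq h.le hp₀ hq₁)
      (apply_zero_le_of_range_subset hp h.ge hq₀ hp₁)
  | succ i ih => exact succ_eq_of_range_eq hp hq h ih
  | pred i ih =>
    obtain ⟨j, hj⟩ := h.le ⟨-i - 1, rfl⟩
    have hsucc := succ_eq_of_range_eq hp hq h hj.symm
    rw [sub_add_cancel, ih] at hsucc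
    rw [← hj, hq.injective hsucc, add_sub_cancel_right]

end CutSequences

section Parsing

variable {d : ℕ} {𝒢 ℋ : Set (List (Fin d))} {x y : FullShift d} {p : ℤ → ℤ}

/-- The word `x_a … x_{b-1}` read off `x` on `[a, b)`; it is empty when `b ≤ a`. -/
def subword (x : FullShift d) (a b : ℤ) : List (Fin d) :=
  List.ofFn fun l : Fin (b - a).toNat => x (a + (l : ℕ))

lemma length_subword (x : FullShift d) (a b : ℤ) : (subword x a b).length = (b - a).toNat :=
  List.length_ofFn

lemma subword_eq_iff {a b : ℤ} (hab : a ≤ b) {g : List (Fin d)} :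
    subword x a b = g ↔
      b = a + g.length ∧ ∀ (l : ℕ) (hl : l < g.length), x (a + l) = g[l] := by
  have hlen : (b - a).toNat = g.length ↔ b = a + g.length := by omega
  simp only [List.ext_getElem_iff, length_subword, hlen]
  refine and_congr_right fun h => forall_congr' fun l => ?_
  simp [subword, hlen.2 h]

lemma isParsing_iff :
    IsParsing 𝒢 x p ↔ StrictMono p ∧ ∀ j, subword x (p j) (p (j + 1)) ∈ 𝒢 := by
  refine and_congr_right fun hp => forall_congr' fun j => ?_
  simp only [← subword_eq_iff (hp (lt_add_one j)).le, exists_eq_right']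

lemma subword_iterate_shift (n : ℕ) (x : FullShift d) (a b : ℤ) :
    subword ((shift d)^[n] x) a b = subword x (a + n) (b + n) := by
  refine List.ext_getElem (by simp only [length_subword, add_sub_add_right_eq_sub]) fun l _ _ => ?_
  simp only [subword, List.getElem_ofFn, iterate_shift_apply, add_right_comm]

lemma isParsing_iterate_shift_iff {n : ℕ} :
    IsParsing 𝒢 ((shift d)^[n] x) p ↔ IsParsing 𝒢 x fun j => p j + n := by
  simp only [isParsing_iff, subword_iterate_shift, StrictMono, add_lt_add_iff_right]

lemma IsParsing.mono (h : 𝒢 ⊆ ℋ) (hp : IsParsing 𝒢 x p) : IsParsing ℋ x p :=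
  isParsing_iff.2 ((isParsing_iff.1 hp).imp_right fun hp j => h (hp j))

lemma IsParsing.comp_add_right (hp : IsParsing 𝒢 x p) (i : ℤ) :
    IsParsing 𝒢 x fun j => p (j + i) :=
  ⟨fun _ _ h => hp.1 (add_lt_add_left h i), fun j => by
    simpa only [add_right_comm] using hp.2 (j + i)⟩

lemma Xseq_mono (h : 𝒢 ⊆ ℋ) : Xseq 𝒢 ⊆ Xseq ℋ :=
  fun _ ⟨p, hp⟩ => ⟨p, hp.mono h⟩

lemma codedShift_mono (h : 𝒢 ⊆ ℋ) : codedShift 𝒢 ⊆ codedShift ℋ :=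
  closure_mono (Xseq_mono h)

lemma mapsTo_shift_Xseq (𝒢 : Set (List (Fin d))) :
    Set.MapsTo (shift d) (Xseq 𝒢) (Xseq 𝒢) := fun _ ⟨p, hp⟩ =>
  ⟨fun j => p j - 1, (isParsing_iterate_shift_iff (n := 1)).2 (by simpa using hp)⟩

lemma mapsTo_shift_codedShift (𝒢 : Set (List (Fin d))) :
    Set.MapsTo (shift d) (codedShift 𝒢) (codedShift 𝒢) :=
  (mapsTo_shift_Xseq 𝒢).closure continuous_shift

end Parsing

section CleanPoints

variable {d : ℕ} {𝒢 ℋ ℋ' : Set (List (Fin d))} {k : ℕ}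

/-- The points of `Xseq 𝒢` admitting a parsing whose blocks meeting `[-k, k]` all belong to `ℋ`. -/
def cleanSet (𝒢 ℋ : Set (List (Fin d))) (k : ℕ) : Set (FullShift d) :=
  {x | ∃ p, IsParsing 𝒢 x p ∧
    ∀ j, -(k : ℤ) < p (j + 1) → p j ≤ k → subword x (p j) (p (j + 1)) ∈ ℋ}

lemma cleanSet_mono (h : ℋ ⊆ ℋ') (k : ℕ) : cleanSet 𝒢 ℋ k ⊆ cleanSet 𝒢 ℋ' k :=
  fun _ ⟨p, hp, hclean⟩ => ⟨p, hp, fun j h₁ h₂ => h (hclean j h₁ h₂)⟩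

lemma cleanSet_subset_Xseq (𝒢 ℋ : Set (List (Fin d))) (k : ℕ) : cleanSet 𝒢 ℋ k ⊆ Xseq 𝒢 :=
  fun _ ⟨p, hp, _⟩ => ⟨p, hp⟩

lemma cleanSet_self (𝒢 : Set (List (Fin d))) (k : ℕ) : cleanSet 𝒢 𝒢 k = Xseq 𝒢 :=
  (cleanSet_subset_Xseq 𝒢 𝒢 k).antisymm fun _ ⟨p, hp⟩ =>
    ⟨p, hp, fun j _ _ => (isParsing_iff.1 hp).2 j⟩

lemma subword_mem_of_iterate_shift_mem_cleanSet (hU : UniqueRep 𝒢) {x : FullShift d} {p : ℤ → ℤ}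
    (hp : IsParsing 𝒢 x p) {n : ℕ} (hx : (shift d)^[n] x ∈ cleanSet 𝒢 ℋ k) {j : ℤ}
    (h₁ : (n : ℤ) - k < p (j + 1)) (h₂ : p j ≤ n + k) : subword x (p j) (p (j + 1)) ∈ ℋ := by
  obtain ⟨q, hq, hclean⟩ := hx
  have hq' := isParsing_iterate_shift_iff.1 hq
  have hrange := hU x _ _ hp hq'
  obtain ⟨i, hi⟩ := hrange.le ⟨j, rfl⟩
  have hi' := succ_eq_of_range_eq hp.1 hq'.1 hrange hi.symm
  dsimp only at hi hi'
  rw [← hi, hi', ← subword_iterate_shift]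
  exact hclean i (by omega) (by omega)

lemma iUnion_cleanSet {ℋ : ℕ → Set (List (Fin d))} (hmono : Monotone ℋ) (k : ℕ) :
    ⋃ m, cleanSet (⋃ m, ℋ m) (ℋ m) k = Xseq (⋃ m, ℋ m) := by
  refine (Set.iUnion_subset fun m => cleanSet_subset_Xseq _ _ k).antisymm ?_
  rintro x ⟨p, hp⟩
  obtain ⟨a, ha, -⟩ := exists_mem_block hp.1 (-k)
  obtain ⟨b, -, hb⟩ := exists_mem_block hp.1 k
  have hev : ∀ᶠ m in atTop, ∀ j ∈ Finset.Icc a b, subword x (p j) (p (j + 1)) ∈ ℋ m := by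
    refine (Filter.eventually_all_finset _).2 fun j _ => ?_
    obtain ⟨m, hm⟩ := Set.mem_iUnion.1 ((isParsing_iff.1 hp).2 j)
    filter_upwards [eventually_ge_atTop m] with n hmn using hmono hmn hm
  obtain ⟨m, hm⟩ := hev.exists
  refine Set.mem_iUnion.2 ⟨m, p, hp, fun j h₁ h₂ => hm j (Finset.mem_Icc.2 ⟨?_, ?_⟩)⟩
  · exact Int.lt_add_one_iff.1 (hp.1.lt_iff_lt.1 (ha.trans_lt h₁))
  · exact Int.lt_add_one_iff.1 (hp.1.lt_iff_lt.1 (h₂.trans_lt hb))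

lemma IsParsing.exists_centered {x : FullShift d} {p : ℤ → ℤ} (hp : IsParsing 𝒢 x p) :
    ∃ i, IsParsing 𝒢 x (fun j => p (j + i)) ∧ p (0 + i) ≤ 0 ∧ 0 < p (1 + i) := by
  obtain ⟨i, hi₀, hi₁⟩ := exists_mem_block hp.1 0
  exact ⟨i, hp.comp_add_right i, by rwa [zero_add], by rwa [add_comm]⟩

/-- The points of `Xseq 𝒢` together with a parsing, normalised so that block `0` covers
position `0`. -/
def centeredParsings (𝒢 : Set (List (Fin d))) : Set (FullShift d × (ℤ → ℤ)) :=
  {y | IsParsing 𝒢 y.1 y.2 ∧ y.2 0 ≤ 0 ∧ 0 < y.2 1}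

lemma injOn_fst_centeredParsings (hU : UniqueRep 𝒢) :
    Set.InjOn Prod.fst (centeredParsings 𝒢) := by
  rintro ⟨x, p⟩ ⟨hp, hp₀, hp₁⟩ ⟨_, q⟩ ⟨hq, hq₀, hq₁⟩ rfl
  exact Prod.ext rfl (eq_of_range_eq hp.1 hq.1 (hU x p q hp hq) hp₀ hp₁ hq₀ hq₁)

lemma cleanSet_eq_image_fst (𝒢 ℋ : Set (List (Fin d))) (k : ℕ) :
    cleanSet 𝒢 ℋ k = Prod.fst '' (centeredParsings 𝒢 ∩ {y | ∀ j, -(k : ℤ) < y.2 (j + 1) →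
      y.2 j ≤ k → subword y.1 (y.2 j) (y.2 (j + 1)) ∈ ℋ}) := by
  refine Set.Subset.antisymm ?_ ?_
  · rintro x ⟨p, hp, hclean⟩
    obtain ⟨i, hi⟩ := hp.exists_centered
    refine ⟨(x, fun j => p (j + i)), ⟨hi, fun j h₁ h₂ => ?_⟩, rfl⟩
    simp only [add_right_comm j 1 i] at h₁ ⊢
    exact hclean (j + i) h₁ h₂
  · rintro _ ⟨⟨x, p⟩, ⟨⟨hp, -⟩, hclean⟩, rfl⟩
    exact ⟨p, hp, hclean⟩

lemma measurableSet_subword_mem (ℋ : Set (List (Fin d))) (a b : ℤ) :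
    MeasurableSet {x : FullShift d | subword x a b ∈ ℋ} := by
  have hcont : Continuous fun (x : FullShift d) (l : Fin (b - a).toNat) => x (a + (l : ℕ)) :=
    continuous_pi fun l => continuous_apply _
  exact hcont.measurable (Set.toFinite (List.ofFn ⁻¹' ℋ)).measurableSet

lemma measurable_snd_apply (d : ℕ) (j : ℤ) :
    Measurable fun y : FullShift d × (ℤ → ℤ) => y.2 j :=
  (measurable_pi_apply j).comp measurable_snd

lemma measurableSet_subword_apply_mem (ℋ : Set (List (Fin d))) (j : ℤ) :
    MeasurableSet {y : FullShift d × (ℤ → ℤ) | subword y.1 (y.2 j) (y.2 (j + 1)) ∈ ℋ} := by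
  have hunion : {y : FullShift d × (ℤ → ℤ) | subword y.1 (y.2 j) (y.2 (j + 1)) ∈ ℋ} =
      ⋃ (a : ℤ) (b : ℤ), {x | subword x a b ∈ ℋ} ×ˢ {p | p j = a ∧ p (j + 1) = b} := by
    ext y
    simp
  rw [hunion]
  refine MeasurableSet.iUnion fun a => MeasurableSet.iUnion fun b =>
    (measurableSet_subword_mem ℋ a b).prod (MeasurableSet.inter ?_ ?_)
  · exact measurableSet_eq_fun (measurable_pi_apply j) measurable_const
  · exact measurableSet_eq_fun (measurable_pi_apply (j + 1)) measurable_const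

lemma measurableSet_centeredParsings (𝒢 : Set (List (Fin d))) :
    MeasurableSet (centeredParsings 𝒢) := by
  have hmono : MeasurableSet {y : FullShift d × (ℤ → ℤ) | StrictMono y.2} := by
    simp only [StrictMono, Set.ofPred_forall]
    exact MeasurableSet.iInter fun i => MeasurableSet.iInter fun j => MeasurableSet.iInter fun _ =>
      measurableSet_lt (measurable_snd_apply d i) (measurable_snd_apply d j)
  have hblock : MeasurableSet {y : FullShift d × (ℤ → ℤ) |
      ∀ j, subword y.1 (y.2 j) (y.2 (j + 1)) ∈ 𝒢} := by
    simp only [Set.ofPred_forall]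
    exact MeasurableSet.iInter (measurableSet_subword_apply_mem 𝒢)
  simp only [centeredParsings, isParsing_iff]
  exact (hmono.inter hblock).inter <|
    (measurableSet_le (measurable_snd_apply d 0) measurable_const).inter
      (measurableSet_lt measurable_const (measurable_snd_apply d 1))

/-- By the Lusin–Souslin theorem: unique representation makes the set of clean points an injective
projection of a Borel set. -/
lemma measurableSet_cleanSet (hU : UniqueRep 𝒢) (ℋ : Set (List (Fin d))) (k : ℕ) :
    MeasurableSet (cleanSet 𝒢 ℋ k) := by
  have hclean : MeasurableSet {y : FullShift d × (ℤ → ℤ) | ∀ j, -(k : ℤ) < y.2 (j + 1) →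
      y.2 j ≤ k → subword y.1 (y.2 j) (y.2 (j + 1)) ∈ ℋ} := by
    rw [Set.ofPred_forall]
    exact MeasurableSet.iInter fun j =>
      (measurableSet_lt measurable_const (measurable_snd_apply d (j + 1))).imp <|
        (measurableSet_le (measurable_snd_apply d j) measurable_const).imp
          (measurableSet_subword_apply_mem ℋ j)
  rw [cleanSet_eq_image_fst]
  exact ((measurableSet_centeredParsings 𝒢).inter hclean).image_of_measurable_injOn
    measurable_fst ((injOn_fst_centeredParsings hU).mono Set.inter_subset_left)

lemma measurableSet_Xseq (hU : UniqueRep 𝒢) : MeasurableSet (Xseq 𝒢) :=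
  cleanSet_self 𝒢 0 ▸ measurableSet_cleanSet hU 𝒢 0

end CleanPoints

section Surgery

variable {d : ℕ}

lemma exists_forall_succ_eq_add (f : ℤ → ℤ) (a : ℤ) :
    ∃ s : ℤ → ℤ, s 0 = a ∧ ∀ i, s (i + 1) = s i + f i := by
  refine ⟨fun i => a + ∑ j ∈ Finset.Ico 0 i, f j - ∑ j ∈ Finset.Ico i 0, f j, by simp,
    fun i => ?_⟩
  rcases le_or_gt 0 i with hi | hi
  · have hi' : 0 ≤ i + 1 := by omega
    simp only [← Finset.sum_Ico_add_eq_sum_Ico_add_one hi, Finset.Ico_eq_empty_of_le hi,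
      Finset.Ico_eq_empty_of_le hi', Finset.sum_empty]
    ring
  · have hi' : i + 1 ≤ 0 := by omega
    simp only [← Finset.insert_Ico_add_one_left_eq_Ico hi, Finset.Ico_eq_empty_of_le hi.le,
      Finset.Ico_eq_empty_of_le hi', Finset.sum_empty]
    rw [Finset.sum_insert (by simp)]
    ring

lemma exists_concatenation {g : ℤ → List (Fin d)} (hg : ∀ j, g j ≠ []) (a : ℤ) :
    ∃ (x : FullShift d) (p : ℤ → ℤ), p 0 = a ∧ StrictMono p ∧
      ∀ j, subword x (p j) (p (j + 1)) = g j := by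
  obtain ⟨p, hp₀, hp⟩ := exists_forall_succ_eq_add (fun j => (g j).length) a
  have hmono : StrictMono p := strictMono_int_of_lt_succ fun j => by
    have := List.length_pos_iff.2 (hg j)
    rw [hp]
    omega
  choose J hJ hJ₁ using exists_mem_block hmono
  have hlt (i : ℤ) : (i - p (J i)).toNat < (g (J i)).length := by
    have h := hJ₁ i
    rw [hp] at h
    have := hJ i
    omega
  refine ⟨fun i => (g (J i))[(i - p (J i)).toNat]'(hlt i), p, hp₀, hmono, fun j => ?_⟩
  refine (subword_eq_iff (hmono (lt_add_one j)).le).2 ⟨hp j, fun l hl => ?_⟩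
  have hJl : J (p j + l) = j :=
    eq_of_mem_block hmono (hJ _) (hJ₁ _) (by omega) (by rw [hp]; omega)
  simp only [hJl, add_sub_cancel_left, Int.toNat_natCast]

lemma exists_blockwise_translation {p p' : ℤ → ℤ} (hp : StrictMono p) (hp' : Monotone p')
    (h : ∀ j, p' (j + 1) - p' j ≤ p (j + 1) - p j) :
    ∃ σ : ℤ → ℤ, ∀ j i, p j ≤ i → i ≤ p (j + 1) →
      σ i = min (p' j + (i - p j)) (p' (j + 1)) := by
  choose J hJ hJ₁ using exists_mem_block hp
  refine ⟨fun i => min (p' (J i) + (i - p (J i))) (p' (J i + 1)), fun j i hj hj₁ => ?_⟩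
  dsimp only
  rcases hj₁.lt_or_eq with hlt | rfl
  · rw [eq_of_mem_block hp (hJ i) (hJ₁ i) hj hlt]
  · have hJj : J (p (j + 1)) = j + 1 :=
      eq_of_mem_block hp (hJ _) (hJ₁ _) le_rfl (hp (lt_add_one _))
    have h₁ := hp' (lt_add_one (j + 1)).le
    have h₂ := h j
    rw [hJj]
    omega

lemma subword_translate {x x' : FullShift d} {a b a' b' i : ℤ}
    (h : subword x a b = subword x' a' b') (hi : a ≤ i) (hib : i < b) :
    x' (a' + (i - a)) = x i := by
  obtain ⟨hb, hx⟩ := (subword_eq_iff (hi.trans hib.le)).1 h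
  have hl : (i - a).toNat < (subword x' a' b').length := by omega
  have hcast : ((i - a).toNat : ℤ) = i - a := Int.toNat_of_nonneg (by omega)
  have hi' := hx _ hl
  simp only [subword, List.getElem_ofFn, hcast, add_sub_cancel] at hi'
  exact hi'.symm

lemma exists_point_of_blocks {x : FullShift d} {p : ℤ → ℤ} (hp : StrictMono p) (hp₀ : p 0 ≤ 0)
    (hp₁ : 0 < p 1) {g : ℤ → List (Fin d)} (hg : ∀ j, g j ≠ [])
    (hgp : ∀ j, ((g j).length : ℤ) ≤ p (j + 1) - p j) :
    ∃ (x' : FullShift d) (p' σ : ℤ → ℤ), StrictMono p' ∧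
      (∀ j, subword x' (p' j) (p' (j + 1)) = g j) ∧ σ 0 = 0 ∧
      (∀ i, σ i ≤ σ (i + 1) ∧ σ (i + 1) ≤ σ i + 1) ∧
      ∀ j, subword x (p j) (p (j + 1)) = g j → ∀ i, p j ≤ i → i < p (j + 1) →
        σ (i + 1) = σ i + 1 ∧ x' (σ i) = x i := by
  obtain ⟨x', p', hp'₀, hp', hx'⟩ := exists_concatenation hg (-min (-p 0) (g 0).length)
  have hlen (j : ℤ) : p' (j + 1) = p' j + (g j).length :=
    ((subword_eq_iff (hp' (lt_add_one j)).le).1 (hx' j)).1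
  obtain ⟨σ, hσ⟩ := exists_blockwise_translation hp hp'.monotone fun j =>
    (sub_eq_of_eq_add' (hlen j)).trans_le (hgp j)
  refine ⟨x', p', σ, hp', hx', ?_, fun i => ?_, fun j hj i hi hi₁ => ?_⟩
  · rw [hσ 0 0 hp₀ (by simpa using hp₁.le), hlen]
    omega
  · obtain ⟨j, hj, hj₁⟩ := exists_mem_block hp i
    rw [hσ j i hj hj₁.le, hσ j (i + 1) (by omega) hj₁]
    omega
  · have h := ((subword_eq_iff (hp (lt_add_one j)).le).1 hj).1
    have hσi : σ i = p' j + (i - p j) := by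
      rw [hσ j i hi hi₁.le, hlen]
      omega
    refine ⟨by rw [hσi, hσ j (i + 1) (by omega) hi₁, hlen]; omega, ?_⟩
    rw [hσi]
    exact subword_translate (hj.trans (hx' j).symm) hi hi₁

lemma exists_mem_Xseq_translating_blocks {𝒢 ℋ : Set (List (Fin d))} {g₀ : List (Fin d)}
    (hg₀ : g₀ ∈ ℋ) (hne : g₀ ≠ []) (hmin : ∀ g ∈ 𝒢, g ≠ [] → g₀.length ≤ g.length) {x : FullShift d}
    {p : ℤ → ℤ} (hp : IsParsing 𝒢 x p) (hp₀ : p 0 ≤ 0) (hp₁ : 0 < p 1) :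
    ∃ x' ∈ Xseq ℋ, ∃ σ : ℤ → ℤ, σ 0 = 0 ∧ (∀ i, σ i ≤ σ (i + 1) ∧ σ (i + 1) ≤ σ i + 1) ∧
      ∀ j, subword x (p j) (p (j + 1)) ∈ ℋ → ∀ i, p j ≤ i → i < p (j + 1) →
        σ (i + 1) = σ i + 1 ∧ x' (σ i) = x i := by
  have hlen (j : ℤ) : p (j + 1) - p j = (subword x (p j) (p (j + 1))).length := by
    have := hp.1 (lt_add_one j)
    rw [length_subword]
    omega
  have hnil (j : ℤ) : subword x (p j) (p (j + 1)) ≠ [] := by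
    have := hlen j
    have := hp.1 (lt_add_one j)
    rw [← List.length_pos_iff]
    omega
  have hreplace (j : ℤ) : ∃ g ∈ ℋ, g ≠ [] ∧ (g.length : ℤ) ≤ p (j + 1) - p j ∧
      (subword x (p j) (p (j + 1)) ∈ ℋ → subword x (p j) (p (j + 1)) = g) := by
    by_cases h : subword x (p j) (p (j + 1)) ∈ ℋ
    · exact ⟨_, h, hnil j, (hlen j).ge, fun _ => rfl⟩
    · have := hmin _ ((isParsing_iff.1 hp).2 j) (hnil j)
      exact ⟨g₀, hg₀, hne, by rw [hlen]; exact_mod_cast this, fun h' => (h h').elim⟩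
  choose g hgℋ hg hgle hgp using hreplace
  obtain ⟨x', p', σ, hp', hx', hσ₀, hσ, hσx⟩ := exists_point_of_blocks hp.1 hp₀ hp₁ hg hgle
  exact ⟨x', ⟨p', isParsing_iff.2 ⟨hp', fun j => hx' j ▸ hgℋ j⟩⟩, σ, hσ₀, hσ,
    fun j hj => hσx j (hgp j hj)⟩

/-- `σ` moves the positions of `x` monotonically, without gaps, to positions of `x'`; at the times
in `A` it advances, and it preserves the letters within distance `k`. -/
structure IsCompression (k : ℕ) (A : Set ℕ) (x x' : FullShift d) (σ : ℕ → ℕ) : Prop where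
  map_zero : σ 0 = 0
  le_succ : ∀ i, σ i ≤ σ (i + 1)
  succ_le : ∀ i, σ (i + 1) ≤ σ i + 1
  succ_of_mem : ∀ i ∈ A, σ (i + 1) = σ i + 1
  apply_add : ∀ i ∈ A, ∀ l : ℤ, |l| ≤ k → x' (σ i + l) = x (i + l)

lemma eq_add_of_forall_succ_eq {σ : ℤ → ℤ} {i m : ℤ}
    (h : ∀ l, |l| ≤ m → σ (i + l + 1) = σ (i + l) + 1) {l : ℤ} (hl : |l| ≤ m) :
    σ (i + l) = σ i + l := by
  induction l using Int.induction_on with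
  | zero => simp
  | succ l ih =>
    have hl' : |(l : ℤ)| ≤ m := by
      rw [abs_le] at hl ⊢
      omega
    rw [← add_assoc, h _ hl', ih hl', add_assoc]
  | pred l ih =>
    have hl' : |(-l : ℤ)| ≤ m := by
      rw [abs_le] at hl ⊢
      omega
    have := h _ hl
    rw [add_assoc, sub_add_cancel, ih hl'] at this
    omega

lemma exists_isCompression {𝒢 ℋ : Set (List (Fin d))} (hU : UniqueRep 𝒢) {g₀ : List (Fin d)}
    (hg₀ : g₀ ∈ ℋ) (hne : g₀ ≠ []) (hmin : ∀ g ∈ 𝒢, g ≠ [] → g₀.length ≤ g.length) (k : ℕ)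
    {x : FullShift d} (hx : x ∈ Xseq 𝒢) :
    ∃ x' ∈ Xseq ℋ, ∃ σ, IsCompression k {n | (shift d)^[n] x ∈ cleanSet 𝒢 ℋ k} x x' σ := by
  obtain ⟨q, hq⟩ := hx
  obtain ⟨a, hp, hp₀, hp₁⟩ := hq.exists_centered
  obtain ⟨x', hx', σ, hσ₀, hσ, hσx⟩ := exists_mem_Xseq_translating_blocks hg₀ hne hmin hp hp₀ hp₁
  have hclean (n : ℕ) (hn : (shift d)^[n] x ∈ cleanSet 𝒢 ℋ k) (l : ℤ) (hl : |l| ≤ k) :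
      σ (n + l + 1) = σ (n + l) + 1 ∧ x' (σ (n + l)) = x (n + l) := by
    obtain ⟨j, hj, hj₁⟩ := exists_mem_block hp.1 (n + l)
    rw [abs_le] at hl
    exact hσx j (subword_mem_of_iterate_shift_mem_cleanSet hU hp hn (by omega) (by omega)) _ hj hj₁
  have hmono : Monotone σ := monotone_int_of_le_succ fun i => (hσ i).1
  obtain ⟨τ, hτ⟩ : ∃ τ : ℕ → ℕ, ∀ n, (τ n : ℤ) = σ n :=
    ⟨fun n => (σ n).toNat, fun n => Int.toNat_of_nonneg (hσ₀ ▸ hmono n.cast_nonneg)⟩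
  refine ⟨x', hx', τ, ⟨by exact_mod_cast (hτ 0).trans hσ₀, fun i => ?_, fun i => ?_,
    fun i hi => ?_, fun i hi l hl => ?_⟩⟩
  · zify [hτ]
    exact (hσ i).1
  · zify [hτ]
    exact (hσ i).2
  · zify [hτ]
    simpa using (hclean i hi 0 (by simp)).1
  · have htrans := eq_add_of_forall_succ_eq (fun l hl => (hclean i hi l hl).1) hl
    rw [hτ, ← htrans]
    exact (hclean i hi l hl).2

end Surgery

section Compression

variable {d k : ℕ} {A B : Set ℕ} {x x' y y' : FullShift d} {σ τ : ℕ → ℕ}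

lemma IsCompression.apply (h : IsCompression k A x x' σ) {i : ℕ} (hi : i ∈ A) :
    x' (σ i) = x i := by
  simpa using h.apply_add i hi 0 (by simp)

lemma IsCompression.le_self (h : IsCompression k A x x' σ) (n : ℕ) : σ n ≤ n := by
  induction n with
  | zero => exact h.map_zero.le
  | succ n ih => exact (h.succ_le n).trans (Nat.succ_le_succ ih)

open Classical in
/-- The information, in addition to `x'`, from which `x` can be recovered through a compression:
at the times outside `A` the letter of `x`, and whether `σ` stays put. -/
def compressionCode (A : Set ℕ) (x : FullShift d) (σ : ℕ → ℕ) (i : ℕ) : Option (Fin d × Bool) :=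
  if i ∈ A then none else some (x i, decide (σ (i + 1) = σ i))

lemma compressionCode_of_mem {i : ℕ} (hi : i ∈ A) : compressionCode A x σ i = none :=
  if_pos hi

lemma compressionCode_of_notMem {i : ℕ} (hi : i ∉ A) :
    compressionCode A x σ i = some (x i, decide (σ (i + 1) = σ i)) :=
  if_neg hi

lemma IsCompression.eq_of_compressionCode_eq (hσ : IsCompression k A x x' σ)
    (hτ : IsCompression k B y y' τ) {i : ℕ} (hστ : σ i = τ i) (hx' : x' (σ i) = y' (σ i))
    (hcode : compressionCode A x σ i = compressionCode B y τ i) :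
    x i = y i ∧ σ (i + 1) = τ (i + 1) := by
  by_cases hA : i ∈ A <;> by_cases hB : i ∈ B <;>
    simp only [compressionCode_of_mem, compressionCode_of_notMem, hA, hB, not_false_eq_true,
      reduceCtorEq, Option.some.injEq, Prod.mk.injEq, decide_eq_decide] at hcode
  · refine ⟨?_, by rw [hσ.succ_of_mem i hA, hτ.succ_of_mem i hB, hστ]⟩
    rw [← hσ.apply hA, ← hτ.apply hB, hx', hστ]
  · have := hσ.le_succ i
    have := hσ.succ_le i
    have := hτ.le_succ i
    have := hτ.succ_le i
    exact ⟨hcode.1, by omega⟩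

lemma IsCompression.apply_eq_of_compressionCode_eq (hσ : IsCompression k A x x' σ)
    (hτ : IsCompression k B y y' τ) {n : ℕ} (hx' : ∀ i < n, x' (i : ℤ) = y' (i : ℤ))
    (hcode : ∀ i < n, compressionCode A x σ i = compressionCode B y τ i) :
    ∀ i < n, x (i : ℤ) = y (i : ℤ) := by
  have hstep (i : ℕ) (hi : i < n) (hστ : σ i = τ i) :=
    hσ.eq_of_compressionCode_eq hτ hστ (hx' _ ((hσ.le_self i).trans_lt hi)) (hcode i hi)
  have hστ : ∀ i < n, σ i = τ i := fun i => by
    induction i with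
    | zero => exact fun _ => hσ.map_zero.trans hτ.map_zero.symm
    | succ i ih => exact fun hi => (hstep i (by omega) (ih (by omega))).2
  exact fun i hi => (hstep i hi (hστ i hi)).1

end Compression

section Comparison

variable {d k n : ℕ} {C X Y Z : Set (FullShift d)} {φ : FullShift d → ℝ} {K δ : ℝ}

-- The second term pays `K` for each letter lost so far; those letters are given back at the end, in
-- `IsCompression.birkhoff_le`.
lemma IsCompression.birkhoff_le_birkhoff_apply {x x' : FullShift d} {σ : ℕ → ℕ}
    (hσ : IsCompression k {i | (shift d)^[i] x ∈ C} x x' σ) (hZ : Set.MapsTo (shift d) Z Z)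
    (hK : ∀ x ∈ Z, |φ x| ≤ K) (hδ : 0 ≤ δ)
    (hvar : ∀ x ∈ Z, ∀ y ∈ Z, (∀ i : ℤ, |i| ≤ k → x i = y i) → |φ x - φ y| ≤ δ)
    (hx : x ∈ Z) (hx' : x' ∈ Z) (n : ℕ) :
    birkhoff φ n x ≤ birkhoff φ (σ n) x' - (n - σ n) * K + n * δ +
      2 * K * birkhoff (Cᶜ.indicator 1) n x := by
  induction n with
  | zero => simp [birkhoff, hσ.map_zero]
  | succ n ih =>
    have hxn := hZ.iterate n hx
    have hxn' := hZ.iterate (σ n) hx'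
    have hKx := abs_le.1 (hK _ hxn)
    have hKx' := abs_le.1 (hK _ hxn')
    rw [birkhoff_succ, birkhoff_succ]
    by_cases hC : (shift d)^[n] x ∈ C
    · have hagree : ∀ i : ℤ, |i| ≤ k → (shift d)^[n] x i = (shift d)^[σ n] x' i := fun i hi => by
        rw [iterate_shift_apply, iterate_shift_apply, add_comm, add_comm i,
          hσ.apply_add n hC i hi]
      have hvarn := (abs_le.1 (hvar _ hxn _ hxn' hagree)).2
      rw [hσ.succ_of_mem n hC, birkhoff_succ, Set.indicator_of_notMem (Set.notMem_compl_iff.2 hC)]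
      push_cast
      linarith
    · rw [Set.indicator_of_mem (Set.mem_compl hC), Pi.one_apply]
      rcases (hσ.le_succ n).eq_or_lt with heq | hlt
      · rw [← heq]
        push_cast
        linarith
      · rw [le_antisymm (hσ.succ_le n) hlt, birkhoff_succ]
        push_cast
        linarith

lemma IsCompression.birkhoff_le {x x' : FullShift d} {σ : ℕ → ℕ}
    (hσ : IsCompression k {i | (shift d)^[i] x ∈ C} x x' σ) (hZ : Set.MapsTo (shift d) Z Z)
    (hK : ∀ x ∈ Z, |φ x| ≤ K) (hδ : 0 ≤ δ)
    (hvar : ∀ x ∈ Z, ∀ y ∈ Z, (∀ i : ℤ, |i| ≤ k → x i = y i) → |φ x - φ y| ≤ δ)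
    (hx : x ∈ Z) (hx' : x' ∈ Z) (n : ℕ) :
    birkhoff φ n x ≤ birkhoff φ n x' + n * δ + 2 * K * birkhoff (Cᶜ.indicator 1) n x := by
  have htail := (abs_le.1 (abs_birkhoff_le hZ hK (n - σ n) (hZ.iterate (σ n) hx'))).1
  have hsplit := birkhoff_add φ (σ n) (n - σ n) x'
  rw [Nat.cast_sub (hσ.le_self n)] at htail
  rw [Nat.add_sub_cancel' (hσ.le_self n)] at hsplit
  linarith [hσ.birkhoff_le_birkhoff_apply hZ hK hδ hvar hx hx' n]

lemma sum_mul_prod_le {ι α β γ : Type*} [Fintype ι] [Fintype α] [Fintype β] {F : α → ℝ}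
    {w : β → ℝ} (hF : ∀ a, 0 ≤ F a) (hw : ∀ b, 0 ≤ w b) {s : Finset γ} {u : γ → α}
    {t : γ → ι → β} (h : Set.InjOn (fun x => (u x, t x)) s) :
    ∑ x ∈ s, F (u x) * ∏ i, w (t x i) ≤ (∑ a, F a) * (∑ b, w b) ^ Fintype.card ι := by
  classical
  calc ∑ x ∈ s, F (u x) * ∏ i, w (t x i)
      = ∑ y ∈ s.image fun x => (u x, t x), F y.1 * ∏ i, w (y.2 i) :=
        (Finset.sum_image (f := fun y => F y.1 * ∏ i, w (y.2 i)) h).symm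
    _ ≤ ∑ y : α × (ι → β), F y.1 * ∏ i, w (y.2 i) :=
        Finset.sum_le_sum_of_subset_of_nonneg (Finset.subset_univ _) fun y _ _ =>
          mul_nonneg (hF _) (Finset.prod_nonneg fun _ _ => hw _)
    _ = (∑ a, F a) * ∏ _i : ι, ∑ b, w b := by
        rw [Fintype.prod_sum, Finset.sum_mul_sum, ← Finset.univ_product_univ, Finset.sum_product]
    _ = (∑ a, F a) * (∑ b, w b) ^ Fintype.card ι := by rw [Finset.prod_const, Finset.card_univ]

/-- The factor by which a code letter is weighted in the count of compressions: `exp a` for each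
correction. -/
def codeWeight (a : ℝ) (o : Option (Fin d × Bool)) : ℝ :=
  Real.exp (o.elim 0 fun _ => a)

lemma codeWeight_nonneg (a : ℝ) (o : Option (Fin d × Bool)) : 0 ≤ codeWeight a o :=
  (Real.exp_pos _).le

lemma sum_codeWeight (d : ℕ) (a : ℝ) :
    ∑ o : Option (Fin d × Bool), codeWeight a o = 1 + 2 * d * Real.exp a := by
  simp [codeWeight, Fintype.sum_option, mul_comm (d : ℝ)]

lemma prod_codeWeight_compressionCode (a : ℝ) (n : ℕ) (x : FullShift d) (σ : ℕ → ℕ) :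
    ∏ i : Fin n, codeWeight a (compressionCode {i | (shift d)^[i] x ∈ C} x σ i) =
      Real.exp (a * birkhoff (Cᶜ.indicator 1) n x) := by
  rw [Fin.prod_univ_eq_prod_range
      (fun i => codeWeight a (compressionCode {i | (shift d)^[i] x ∈ C} x σ i)),
    birkhoff, Finset.mul_sum, Real.exp_sum]
  refine Finset.prod_congr rfl fun i _ => ?_
  by_cases hi : (shift d)^[i] x ∈ C
  · simp [codeWeight, compressionCode, hi]
  · simp [codeWeight, compressionCode, hi]

lemma IsCompression.exp_birkhoff_le {x y : FullShift d} {σ : ℕ → ℕ}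
    (hσ : IsCompression k {i | (shift d)^[i] x ∈ C} x y σ) (hY : Set.MapsTo (shift d) Y Y)
    (hZ : Set.MapsTo (shift d) Z Z) (hYZ : Y ⊆ Z) (hK : ∀ x ∈ Z, |φ x| ≤ K) (hδ : 0 ≤ δ)
    (hvar : ∀ x ∈ Z, ∀ y ∈ Z, (∀ i : ℤ, |i| ≤ k → x i = y i) → |φ x - φ y| ≤ δ)
    (hx : x ∈ Z) (hy : y ∈ Y) (c : ℝ) (n : ℕ) :
    Real.exp (birkhoff (φ - c • Cᶜ.indicator 1) n x) ≤
      Real.exp δ ^ n * (wordWeight Y φ (initialWord n y) * ∏ i : Fin n,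
        codeWeight (2 * K - c) (compressionCode {i | (shift d)^[i] x ∈ C} x σ i)) := by
  have hle := hσ.birkhoff_le hZ hK hδ hvar hx (hYZ hy) n
  rw [prod_codeWeight_compressionCode]
  calc Real.exp (birkhoff (φ - c • Cᶜ.indicator 1) n x)
      ≤ Real.exp (n * δ + (birkhoff φ n y + (2 * K - c) * birkhoff (Cᶜ.indicator 1) n x)) := by
        rw [birkhoff_sub_smul, Real.exp_le_exp]
        linarith
    _ = Real.exp δ ^ n * (Real.exp (birkhoff φ n y) *
          Real.exp ((2 * K - c) * birkhoff (Cᶜ.indicator 1) n x)) := by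
        rw [Real.exp_add, Real.exp_add, Real.exp_nat_mul]
    _ ≤ _ := by
        gcongr
        exact exp_birkhoff_le_wordWeight hY (fun x hx => hK x (hYZ hx)) hy
          (mem_cyl_initialWord n y)

lemma Zfun_sub_smul_indicator_le (hY : Set.MapsTo (shift d) Y Y) (hZ : Set.MapsTo (shift d) Z Z)
    (hXZ : X ⊆ Z) (hYZ : Y ⊆ Z) (hK : ∀ x ∈ Z, |φ x| ≤ K) (hδ : 0 ≤ δ)
    (hvar : ∀ x ∈ Z, ∀ y ∈ Z, (∀ i : ℤ, |i| ≤ k → x i = y i) → |φ x - φ y| ≤ δ)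
    (hcomp : ∀ x ∈ X, ∃ y ∈ Y, ∃ σ, IsCompression k {i | (shift d)^[i] x ∈ C} x y σ)
    (c : ℝ) (n : ℕ) :
    Zfun X (φ - c • Cᶜ.indicator 1) n ≤
      Zfun Y φ n * (Real.exp δ * (1 + 2 * d * Real.exp (2 * K - c))) ^ n := by
  refine Zfun_le_of_forall_sum_exp_le fun s hs hinj => ?_
  choose! y hyY σ hσ using hcomp
  let code (x : FullShift d) (i : Fin n) :=
    compressionCode {i | (shift d)^[i] x ∈ C} x (σ x) i
  have hcode : Set.InjOn (fun x => (initialWord n (y x), code x)) s := by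
    intro x₁ hx₁ x₂ hx₂ h
    refine hinj hx₁ hx₂ (initialWord_eq_iff.2 ?_)
    exact (hσ x₁ (hs hx₁)).apply_eq_of_compressionCode_eq (hσ x₂ (hs hx₂))
      (initialWord_eq_iff.1 (congrArg Prod.fst h))
      (Fin.forall_iff.1 (congrFun (congrArg Prod.snd h)))
  have hsum := sum_mul_prod_le (wordWeight_nonneg Y φ) (codeWeight_nonneg (2 * K - c)) hcode
  rw [← Zfun_eq_sum_wordWeight, sum_codeWeight, Fintype.card_fin] at hsum
  calc ∑ x ∈ s, Real.exp (birkhoff (φ - c • Cᶜ.indicator 1) n x)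
      ≤ ∑ x ∈ s, Real.exp δ ^ n * (wordWeight Y φ (initialWord n (y x)) *
          ∏ i, codeWeight (2 * K - c) (code x i)) := Finset.sum_le_sum fun x hx =>
        (hσ x (hs hx)).exp_birkhoff_le hY hZ hYZ hK hδ hvar (hXZ (hs hx)) (hyY x (hs hx)) c n
    _ ≤ Real.exp δ ^ n * (Zfun Y φ n * (1 + 2 * d * Real.exp (2 * K - c)) ^ n) := by
        rw [← Finset.mul_sum]
        gcongr
    _ = _ := by rw [mul_pow, mul_left_comm]

end Comparison

section FreeEnergy

variable {d k : ℕ} {C X Y Z : Set (FullShift d)} {φ : FullShift d → ℝ} {K δ : ℝ}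
  {μ : Measure (FullShift d)}

lemma freeEnergy_sub_smul_indicator [IsFiniteMeasure μ] (hφ : Integrable φ μ)
    {s : Set (FullShift d)} (hs : MeasurableSet s) (c : ℝ) :
    freeEnergy μ (φ - c • s.indicator 1) = freeEnergy μ φ - c * μ.real s := by
  have hind : Integrable (s.indicator (1 : FullShift d → ℝ)) μ :=
    (integrable_const (1 : ℝ)).indicator hs
  rw [freeEnergy, integral_sub' hφ (hind.smul c), freeEnergy, ← add_sub_assoc]
  congr 1
  simp only [Pi.smul_apply, smul_eq_mul]
  rw [integral_const_mul, integral_indicator_one hs]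

lemma freeEnergy_le_pressure_add_of_isCompression [IsProbabilityMeasure μ]
    (hμ : MeasurePreserving (shift d) μ μ) (hμX : μ Xᶜ = 0) (hφ : Integrable φ μ)
    (hC : MeasurableSet C) (hX : Set.MapsTo (shift d) X X) (hY : Set.MapsTo (shift d) Y Y)
    (hZ : Set.MapsTo (shift d) Z Z) (hXZ : X ⊆ Z) (hYZ : Y ⊆ Z) (hK : ∀ x ∈ Z, |φ x| ≤ K)
    (hδ : 0 ≤ δ)
    (hvar : ∀ x ∈ Z, ∀ y ∈ Z, (∀ i : ℤ, |i| ≤ k → x i = y i) → |φ x - φ y| ≤ δ)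
    (hcomp : ∀ x ∈ X, ∃ y ∈ Y, ∃ σ, IsCompression k {i | (shift d)^[i] x ∈ C} x y σ) (c : ℝ) :
    freeEnergy μ φ ≤ pressure Y φ +
      (δ + Real.log (1 + 2 * d * Real.exp (2 * K - c)) + c * μ.real Cᶜ) := by
  have hne : X.Nonempty := Filter.nonempty_of_mem (mem_ae_iff.2 hμX)
  have hind : Integrable (Cᶜ.indicator (1 : FullShift d → ℝ)) μ :=
    (integrable_const (1 : ℝ)).indicator hC.compl
  have hbdd : ∀ x ∈ X, |(φ - c • Cᶜ.indicator 1 : FullShift d → ℝ) x| ≤ K + |c| :=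
      fun x hx => by
    refine (abs_sub _ _).trans (add_le_add (hK x (hXZ hx)) ?_)
    by_cases hxC : x ∈ C <;> simp [hxC]
  have hlog : Real.log (Real.exp δ * (1 + 2 * d * Real.exp (2 * K - c))) =
      δ + Real.log (1 + 2 * d * Real.exp (2 * K - c)) := by
    rw [Real.log_mul (Real.exp_pos δ).ne' (by positivity), Real.log_exp]
  have hpenal : freeEnergy μ (φ - c • Cᶜ.indicator 1) ≤ pressure X (φ - c • Cᶜ.indicator 1) :=
    freeEnergy_le_pressure hX hbdd hμ hμX (hφ.sub (hind.smul c))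
  have hcount : pressure X (φ - c • Cᶜ.indicator 1) ≤
      pressure Y φ + (δ + Real.log (1 + 2 * d * Real.exp (2 * K - c))) :=
    hlog ▸ pressure_le_add_log_of_Zfun_le hX hbdd hne (by positivity)
      (Zfun_sub_smul_indicator_le hY hZ hXZ hYZ hK hδ hvar hcomp c)
  rw [freeEnergy_sub_smul_indicator hφ hC.compl] at hpenal
  linarith

lemma integrable_of_continuousOn [IsFiniteMeasure μ] (hX : IsClosed X) (hμX : μ Xᶜ = 0)
    (hφ : ContinuousOn φ X) : Integrable φ μ := by
  rw [← Measure.restrict_eq_self_of_ae_mem hμX]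
  exact hφ.integrableOn_compact hX.isCompact

lemma freeEnergy_le_pressure_of_mem_invProb (hX : IsClosed X) (hXs : Set.MapsTo (shift d) X X)
    (hφ : ContinuousOn φ X) (hμ : μ ∈ InvProb X) : freeEnergy μ φ ≤ pressure X φ := by
  obtain ⟨hprob, hmap, hμX⟩ := hμ
  have hnull : μ Xᶜ = 0 := (prob_compl_eq_zero_iff hX.measurableSet).2 hμX
  obtain ⟨K, hK⟩ := hX.isCompact.exists_bound_of_continuousOn hφ
  exact freeEnergy_le_pressure hXs hK ⟨measurable_shift, hmap⟩ hnull
    (integrable_of_continuousOn hX hnull hφ)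

lemma tendsto_log_one_add_mul_exp_sub (a b : ℝ) :
    Tendsto (fun c => Real.log (1 + a * Real.exp (b - c))) atTop (𝓝 0) := by
  have hexp : Tendsto (fun c => Real.exp (b - c)) atTop (𝓝 0) :=
    Real.tendsto_exp_atBot.comp (tendsto_const_nhds.add_atBot tendsto_neg_atTop_atBot)
  have harg : Tendsto (fun c => 1 + a * Real.exp (b - c)) atTop (𝓝 1) := by
    simpa using (hexp.const_mul a).const_add 1
  simpa using harg.log one_ne_zero

end FreeEnergy

section Exhaustion

variable {d : ℕ} {𝒢 : Set (List (Fin d))} {ℋ : ℕ → Set (List (Fin d))}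
  {φ : FullShift d → ℝ} {μ : Measure (FullShift d)}

lemma exists_shortest_word (hne : (Xseq 𝒢).Nonempty) :
    ∃ g₀ ∈ 𝒢, g₀ ≠ [] ∧ ∀ g ∈ 𝒢, g ≠ [] → g₀.length ≤ g.length := by
  obtain ⟨x, p, hp⟩ := hne
  obtain ⟨g, hg, hlen, -⟩ := hp.2 0
  have hpos := hp.1 (lt_add_one 0)
  have hex : (𝒢 \ {[]}).Nonempty := ⟨g, hg, fun h => by
    rw [h, List.length_nil, Nat.cast_zero, add_zero] at hlen
    exact hpos.ne' hlen⟩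
  obtain ⟨g₀, ⟨hg₀, hnil⟩, hmin⟩ :=
    exists_minimalFor_of_wellFoundedLT (· ∈ 𝒢 \ {[]}) List.length hex
  exact ⟨g₀, hg₀, hnil, fun g hg hg' => (le_total _ _).elim id fun h => hmin ⟨hg, hg'⟩ h⟩

lemma eventually_forall_exists_isCompression (hU : UniqueRep 𝒢) (hmono : Monotone ℋ)
    (hunion : ⋃ m, ℋ m = 𝒢) (hne : (Xseq 𝒢).Nonempty) (k : ℕ) :
    ∀ᶠ m in atTop, ∀ x ∈ Xseq 𝒢, ∃ y ∈ Xseq (ℋ m), ∃ σ,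
      IsCompression k {i | (shift d)^[i] x ∈ cleanSet 𝒢 (ℋ m) k} x y σ := by
  obtain ⟨g₀, hg₀, hnil, hmin⟩ := exists_shortest_word hne
  obtain ⟨m₀, hm₀⟩ := Set.mem_iUnion.1 (hunion.ge hg₀)
  filter_upwards [eventually_ge_atTop m₀] with m hm x hx
  exact exists_isCompression hU (hmono hm hm₀) hnil hmin k hx

lemma eventually_codedShift_nonempty (hU : UniqueRep 𝒢) (hmono : Monotone ℋ)
    (hunion : ⋃ m, ℋ m = 𝒢) (hne : (Xseq 𝒢).Nonempty) :
    ∀ᶠ m in atTop, (codedShift (ℋ m)).Nonempty := by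
  filter_upwards [eventually_forall_exists_isCompression hU hmono hunion hne 0] with m hm
  obtain ⟨x, hx⟩ := hne
  obtain ⟨y, hy, -⟩ := hm x hx
  exact ⟨y, subset_closure hy⟩

lemma tendsto_measureReal_compl_cleanSet [IsProbabilityMeasure μ] (hU : UniqueRep 𝒢)
    (hmono : Monotone ℋ) (hunion : ⋃ m, ℋ m = 𝒢) (hseq : μ (Xseq 𝒢) = 1) (k : ℕ) :
    Tendsto (fun m => μ.real (cleanSet 𝒢 (ℋ m) k)ᶜ) atTop (𝓝 0) := by
  have hlim := tendsto_measure_iUnion_atTop (μ := μ) (s := fun m => cleanSet 𝒢 (ℋ m) k)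
    fun m n hmn => cleanSet_mono (hmono hmn) k
  have hfull : ⋃ m, cleanSet 𝒢 (ℋ m) k = Xseq 𝒢 := by
    rw [← hunion, iUnion_cleanSet hmono]
  rw [hfull, hseq] at hlim
  have hreal := ((ENNReal.tendsto_toReal ENNReal.one_ne_top).comp hlim).const_sub 1
  rw [ENNReal.toReal_one, sub_self] at hreal
  exact hreal.congr fun m => (probReal_compl_eq_one_sub (measurableSet_cleanSet hU _ k)).symm

lemma eventually_freeEnergy_le_pressure_add (hU : UniqueRep 𝒢) (hmono : Monotone ℋ)
    (hunion : ⋃ m, ℋ m = 𝒢) (hφ : ContinuousOn φ (codedShift 𝒢))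
    (hμ : μ ∈ InvProb (codedShift 𝒢)) (hseq : μ (Xseq 𝒢) = 1) {ε : ℝ} (hε : 0 < ε) :
    ∀ᶠ m in atTop, freeEnergy μ φ ≤ pressure (codedShift (ℋ m)) φ + ε := by
  obtain ⟨hprob, hmap, hμX⟩ := hμ
  have hclosed : IsClosed (codedShift 𝒢) := isClosed_closure
  obtain ⟨K, hK⟩ := hclosed.isCompact.exists_bound_of_continuousOn hφ
  have hε₃ : 0 < ε / 3 := by positivity
  obtain ⟨k, hvar⟩ := exists_forall_agree_abs_sub_le hclosed.isCompact hφ hε₃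
  obtain ⟨c, hc⟩ :=
    ((tendsto_log_one_add_mul_exp_sub (2 * d) (2 * K)).eventually_lt_const hε₃).exists
  have hunclean : ∀ᶠ m in atTop, c * μ.real (cleanSet 𝒢 (ℋ m) k)ᶜ < ε / 3 :=
    ((tendsto_measureReal_compl_cleanSet hU hmono hunion hseq k).const_mul c).eventually_lt_const
      (by rwa [mul_zero])
  have hne : (Xseq 𝒢).Nonempty := nonempty_of_measure_ne_zero (μ := μ) (by simp [hseq])
  filter_upwards [hunclean, eventually_forall_exists_isCompression hU hmono hunion hne k]
    with m hm hcomp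
  have hle := freeEnergy_le_pressure_add_of_isCompression ⟨measurable_shift, hmap⟩
    ((prob_compl_eq_zero_iff (measurableSet_Xseq hU)).2 hseq)
    (integrable_of_continuousOn hclosed
      ((prob_compl_eq_zero_iff hclosed.measurableSet).2 hμX) hφ)
    (measurableSet_cleanSet hU (ℋ m) k) (mapsTo_shift_Xseq 𝒢) (mapsTo_shift_codedShift (ℋ m))
    (mapsTo_shift_codedShift 𝒢) subset_closure
    (codedShift_mono (hunion ▸ Set.subset_iUnion ℋ m)) hK hε₃.le hvar
    (fun x hx => (hcomp x hx).imp fun y hy => hy.imp_left fun h => subset_closure h) c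
  linarith

lemma tendsto_pressure_codedShift (hU : UniqueRep 𝒢) (hmono : Monotone ℋ)
    (hunion : ⋃ m, ℋ m = 𝒢) (hφ : ContinuousOn φ (codedShift 𝒢))
    (hES : IsEqState (codedShift 𝒢) φ μ) (hseq : μ (Xseq 𝒢) = 1) :
    Tendsto (fun m => pressure (codedShift (ℋ m)) φ) atTop (𝓝 (pressure (codedShift 𝒢) φ)) := by
  have hne : (Xseq 𝒢).Nonempty := nonempty_of_measure_ne_zero (μ := μ) (by simp [hseq])
  obtain ⟨K, hK⟩ := isClosed_closure.isCompact.exists_bound_of_continuousOn hφ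
  refine tendsto_order.2 ⟨fun a ha => ?_, fun a ha => ?_⟩
  · filter_upwards [eventually_freeEnergy_le_pressure_add hU hmono hunion hφ hES.1 hseq
      (half_pos (sub_pos.2 ha))] with m hm
    rw [hES.2] at hm
    linarith
  · filter_upwards [eventually_codedShift_nonempty hU hmono hunion hne] with m hm
    exact (pressure_mono (codedShift_mono (hunion ▸ Set.subset_iUnion ℋ m))
      (mapsTo_shift_codedShift _) (mapsTo_shift_codedShift _) hK hm).trans_lt ha

lemma pressure_eq_PseqOf (hφ : ContinuousOn φ (codedShift 𝒢))
    (hES : IsEqState (codedShift 𝒢) φ μ) (hseq : μ (Xseq 𝒢) = 1) :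
    pressure (codedShift 𝒢) φ = PseqOf (codedShift 𝒢) (Xseq 𝒢) φ := by
  have hgreatest : IsGreatest
      {r | ∃ ν ∈ InvProb (codedShift 𝒢), ν (Xseq 𝒢) = 1 ∧ r = freeEnergy ν φ}
      (pressure (codedShift 𝒢) φ) := by
    refine ⟨⟨μ, hES.1, hseq, hES.2.symm⟩, ?_⟩
    rintro _ ⟨ν, hν, -, rfl⟩
    exact freeEnergy_le_pressure_of_mem_invProb isClosed_closure (mapsTo_shift_codedShift 𝒢) hφ hν
  exact hgreatest.csSup_eq.symm

end Exhaustion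

theorem statement1_general {d : ℕ} {𝒢 : Set (List (Fin d))} (hU : UniqueRep 𝒢)
    {ℋ : ℕ → Set (List (Fin d))} (hmono : Monotone ℋ) (hunion : ⋃ m, ℋ m = 𝒢)
    {φ : FullShift d → ℝ} (hφ : ContinuousOn φ (codedShift 𝒢)) {μ : Measure (FullShift d)}
    (hES : IsEqState (codedShift 𝒢) φ μ) (hseq : μ (Xseq 𝒢) = 1) :
    pressure (codedShift 𝒢) φ = PseqOf (codedShift 𝒢) (Xseq 𝒢) φ ∧
      Tendsto (fun m => pressure (codedShift (ℋ m)) φ) atTop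
        (𝓝 (pressure (codedShift 𝒢) φ)) :=
  ⟨pressure_eq_PseqOf hφ hES hseq, tendsto_pressure_codedShift hU hmono hunion hφ hES hseq⟩

/-- for a coded shift with unique representation and a locally constant
potential having an equilibrium state with full measure on `X_seq`, the pressure equals
`P_seq(φ)` and is the limit of the pressures of the finitely generated approximations. -/
theorem statement1 {d : ℕ} (hd : 2 ≤ d) (G : ℕ → List (Fin d)) (hG : ∀ m, G m ≠ [])
    (hU : UniqueRep (Set.range G)) (φ : FullShift d → ℝ) (k : ℕ)
    (hLC : ∀ x ∈ codedShift (Set.range G), ∀ y ∈ codedShift (Set.range G),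
      (∀ i : ℤ, |i| ≤ (k : ℤ) → x i = y i) → φ x = φ y)
    (μφ : Measure (FullShift d))
    (hES : IsEqState (codedShift (Set.range G)) φ μφ)
    (hseq : μφ (Xseq (Set.range G)) = 1) :
    pressure (codedShift (Set.range G)) φ
        = PseqOf (codedShift (Set.range G)) (Xseq (Set.range G)) φ ∧
      Tendsto (fun m : ℕ => pressure (codedShift (G '' {i | i < m})) φ) atTop
        (𝓝 (pressure (codedShift (Set.range G)) φ)) := by
  refine statement1_general hU (ℋ := fun m => G '' {i | i < m})
    (fun m n hmn => Set.image_mono fun i hi => lt_of_lt_of_le hi hmn) ?_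
    (continuousOn_of_locallyConstant hLC) hES hseq
  rw [← Set.image_iUnion, ← Set.image_univ]
  exact congrArg (G '' ·) (Set.iUnion_eq_univ_iff.2 fun i => ⟨i + 1, lt_add_one i⟩)

end PaperStmt
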